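/- For every integer n ≥ 2 and every ε > 0, the random walk L on the unitary group U(n) given by applying an independent Haar-random element of U(2) to the span of a uniformly chosen pair of coordinate vectors satisfies τ_{D,2}(ε) ≤ ⌈n² ln(π√n / ε)⌉; that is, for every probability measure μ on U(n) and every integer t ≥ n² ln(π√n/ε), W_{D,2}(μL^t, H) ≤ ε, where H is the Haar probability measure on U(n). -/

import Mathlib

open MeasureTheory ENNReal Filter Topology Matrix

noncomputable section

/-- The (Borel) product measurable structure on matrices. -/
instance matrixMeasurableSpace {m n R : Type*} [MeasurableSpace R] :
    MeasurableSpace (Matrix m n R) :=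
  (inferInstance : MeasurableSpace (m → n → R))

/-- `η` is a coupling of `μ` and `ν`: its two marginals are `μ` and `ν`. -/
def IsCoupling {X : Type*} [MeasurableSpace X] (η : Measure (X × X)) (μ ν : Measure X) : Prop :=
  η.map Prod.fst = μ ∧ η.map Prod.snd = ν

/-- The `L^p` transportation cost (Wasserstein) distance associated with the distance
function `d`, with values in `ℝ≥0∞`:
`W_{d,p}(μ,ν) = inf { (∫ d(x,y)^p dη)^{1/p} : η a coupling of (μ,ν) }`. -/
def wassersteinE {X : Type*} [MeasurableSpace X] (d : X → X → ℝ≥0∞) (p : ℝ)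
    (μ ν : Measure X) : ℝ≥0∞ :=
  ⨅ (η : Measure (X × X)) (_ : IsCoupling η μ ν), (∫⁻ z, d z.1 z.2 ^ p ∂η) ^ (1 / p)

/-- The length of the curve `γ` over `[0,1]`, w.r.t. the distance function `d`:
the supremum, over all partitions `0 = t 0 ≤ t 1 ≤ ⋯ ≤ t k = 1` of `[0,1]`, of the sums of
the distances between consecutive points of the curve. -/
def pathLengthE {X : Type*} (d : X → X → ℝ≥0∞) (γ : ℝ → X) : ℝ≥0∞ :=
  ⨆ (k : ℕ) (t : Fin (k + 1) → ℝ) (_ : Monotone t) (_ : t 0 = 0) (_ : t (Fin.last k) = 1),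
    ∑ i : Fin k, d (γ (t i.castSucc)) (γ (t i.succ))

/-- The intrinsic (length) distance on the set `S` induced by the distance function `d`:
the infimum of `d`-lengths of continuous paths joining `a` to `b` inside `S`. -/
def intrinsicDistE {X : Type*} [TopologicalSpace X] (d : X → X → ℝ≥0∞) (S : Set X)
    (a b : X) : ℝ≥0∞ :=
  ⨅ (γ : ℝ → X) (_ : ContinuousOn γ (Set.Icc 0 1)) (_ : Set.MapsTo γ (Set.Icc 0 1) S)
    (_ : γ 0 = a) (_ : γ 1 = b), pathLengthE d γ

/-- `t` iterated steps of the Markov transition kernel `P`, started from the initial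
distribution `μ` (so `kernelIterate P t μ = μP^t`). -/
def kernelIterate {X : Type*} [MeasurableSpace X] (P : X → Measure X) :
    ℕ → Measure X → Measure X
  | 0, μ => μ
  | t + 1, μ => (kernelIterate P t μ).bind P

/-- A Haar probability measure for the multiplicative set `S`, viewed as a measure on the
ambient space: a probability measure carried by `S` that is invariant under left and right
translations by all elements of `S`. -/
def IsHaarLike {X : Type*} [MeasurableSpace X] [Mul X] (S : Set X) (μ : Measure X) : Prop :=
  IsProbabilityMeasure μ ∧ μ Sᶜ = 0 ∧
    ∀ a ∈ S, μ.map (fun x => a * x) = μ ∧ μ.map (fun x => x * a) = μ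

/-- The Haar probability measure of a compact matrix group `S` (such as `SO(n)` or `U(n)`),
viewed as a measure on the ambient matrix space.  For such `S` a translation-invariant
probability measure exists and is unique, so `haarLike S` is *the* Haar probability
measure of `S`. -/
def haarLike {X : Type*} [MeasurableSpace X] [Mul X] (S : Set X) : Measure X := by
  classical exact if h : ∃ μ, IsHaarLike S μ then h.choose else 0

/-- The set of pairs `1 ≤ i < j ≤ n` of indices. -/
def pairs (n : ℕ) : Finset (Fin n × Fin n) :=
  Finset.univ.filter fun p => p.1 < p.2

/-- The unitary group `U(n)`, as a subset of the `n × n` complex matrices. -/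
def UU (n : ℕ) : Set (Matrix (Fin n) (Fin n) ℂ) := {a | a * aᴴ = 1}

/-- The Hilbert–Schmidt distance `‖a - b‖_hs = √(Tr((a-b)*(a-b)))` between complex
matrices, as an `ℝ≥0∞`-valued distance function. -/
def hsDistC {n : ℕ} (a b : Matrix (Fin n) (Fin n) ℂ) : ℝ≥0∞ :=
  ENNReal.ofReal (Real.sqrt (Matrix.trace ((a - b)ᴴ * (a - b))).re)

/-- The intrinsic (length) metric `D` on `U(n)` induced by the Hilbert–Schmidt norm:
the infimum of `hs`-lengths of continuous paths inside `U(n)`. -/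
def DU (n : ℕ) (a b : Matrix (Fin n) (Fin n) ℂ) : ℝ≥0∞ :=
  intrinsicDistE hsDistC (UU n) a b

/-- The unitary matrix `u_{ij} ∈ U(n)` acting as `u ∈ U(2)` on `span{e_i, e_j}` (identifying
`e_i, e_j` with the standard basis of `ℂ²`) and as the identity on the orthogonal
complement. -/
def embed2 {n : ℕ} (i j : Fin n) (u : Matrix (Fin 2) (Fin 2) ℂ) :
    Matrix (Fin n) (Fin n) ℂ :=
  Matrix.of fun k l =>
    if k = i ∧ l = i then u 0 0
    else if k = i ∧ l = j then u 0 1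
    else if k = j ∧ l = i then u 1 0
    else if k = j ∧ l = j then u 1 1
    else if k = l then 1 else 0

/-- The transition kernel of the random walk on `U(n)`:
`L_x = (1/C(n,2)) ∑_{1≤i<j≤n} ∫_{U(2)} δ_{R_{ij}·x} dH₂(R)`, where `H₂` is the Haar
probability measure on `U(2)`. -/
def unitKernel (n : ℕ) (x : Matrix (Fin n) (Fin n) ℂ) : Measure (Matrix (Fin n) (Fin n) ℂ) :=
  (n.choose 2 : ℝ≥0∞)⁻¹ •
    ∑ p ∈ pairs n, (haarLike (UU 2)).map fun u => embed2 p.1 p.2 u * x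

/-!
The walk contracts small distances. To couple one step from `x` with one from a nearby `y`, rotate
both in the same plane `span {e_i, e_j}`, but first align the second walker with the first one
inside this plane, by the Cayley transform of half the skew-Hermitian part of the `2 × 2` block of
`y * xᴴ`. To leading order this removes the block from the tangent vector `y * xᴴ - 1`, so averaging
over the `n.choose 2` planes multiplies `‖x - y‖²` by about `1 - (n.choose 2)⁻¹`. The slack between
this and `1 - 2 / n²` absorbs the error as soon as `‖x - y‖² ≤ 2 / n`.

Path coupling globalizes the gain: join `x` and `y` by a chain of `m` steps along a geodesic of
length at most `π√n`, let all the points of the chain move together, each one coupled to its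
predecessor, and bound `D` by the sum of the steps. By the power mean inequality, the contraction of
the sum of the squared steps gives `W_{D,2} ≤ π√n (1 - 2 / n²) ^ (t / 2)` as `m → ∞`.
-/

section Frobenius

open scoped Matrix.Norms.Frobenius ComplexOrder

variable {𝕜 ι κ : Type*} [RCLike 𝕜] [Fintype ι] [Fintype κ]

lemma frobenius_norm_sq_eq_sum (a : Matrix ι κ 𝕜) : ‖a‖ ^ 2 = ∑ i, ∑ j, ‖a i j‖ ^ 2 := by
  rw [frobenius_norm_def, ← Real.sqrt_eq_rpow, Real.sq_sqrt (by positivity)]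
  norm_cast

lemma frobenius_norm_sq_eq_re_trace_mul_conjTranspose (a : Matrix ι κ 𝕜) :
    ‖a‖ ^ 2 = RCLike.re (trace (a * aᴴ)) := by
  simp only [frobenius_norm_sq_eq_sum, trace, Matrix.mul_apply, diag_apply, conjTranspose_apply,
    map_sum, RCLike.star_def, RCLike.mul_conj, ← RCLike.ofReal_pow, RCLike.ofReal_re]

lemma frobenius_norm_sq_eq_re_trace_conjTranspose_mul (a : Matrix ι κ 𝕜) :
    ‖a‖ ^ 2 = RCLike.re (trace (aᴴ * a)) := by
  rw [frobenius_norm_sq_eq_re_trace_mul_conjTranspose, trace_mul_comm]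

lemma re_trace_conjTranspose (a : Matrix ι ι 𝕜) :
    RCLike.re (trace aᴴ) = RCLike.re (trace a) := by
  rw [trace_conjTranspose, RCLike.star_def, RCLike.conj_re]

lemma re_trace_eq_zero_of_skew {a : Matrix ι ι 𝕜} (ha : aᴴ = -a) : RCLike.re (trace a) = 0 := by
  have h := re_trace_conjTranspose a
  rw [ha, trace_neg, map_neg] at h
  linarith

lemma frobenius_norm_mul_of_isometry [DecidableEq κ] {ν : Type*} [Fintype ν] {e : Matrix ι κ 𝕜}
    (he : eᴴ * e = 1) (a : Matrix κ ν 𝕜) : ‖e * a‖ = ‖a‖ := by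
  rw [← sq_eq_sq₀ (norm_nonneg _) (norm_nonneg _), frobenius_norm_sq_eq_re_trace_conjTranspose_mul,
    frobenius_norm_sq_eq_re_trace_conjTranspose_mul, conjTranspose_mul, Matrix.mul_assoc,
    ← Matrix.mul_assoc eᴴ, he, Matrix.one_mul]

lemma frobenius_norm_conjTranspose_mul_le_of_isometry [DecidableEq κ] {ν : Type*} [Fintype ν]
    {e : Matrix ι κ 𝕜} (he : eᴴ * e = 1) (a : Matrix ι ν 𝕜) : ‖eᴴ * a‖ ≤ ‖a‖ := by
  refine le_of_sq_le_sq ?_ (norm_nonneg _)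
  have hpyth : ‖a - e * (eᴴ * a)‖ ^ 2 = ‖a‖ ^ 2 - ‖eᴴ * a‖ ^ 2 := by
    have h : (a - e * (eᴴ * a))ᴴ * (a - e * (eᴴ * a)) = aᴴ * a - (eᴴ * a)ᴴ * (eᴴ * a) := by
      have he' : eᴴ * (e * (eᴴ * a)) = eᴴ * a := by rw [← Matrix.mul_assoc, he, Matrix.one_mul]
      simp only [conjTranspose_sub, conjTranspose_mul, conjTranspose_conjTranspose, Matrix.sub_mul,
        Matrix.mul_sub, Matrix.mul_assoc, he', sub_self, sub_zero]
    simp only [frobenius_norm_sq_eq_re_trace_conjTranspose_mul, h, trace_sub, map_sub]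
  linarith [sq_nonneg ‖a - e * (eᴴ * a)‖]

lemma frobenius_norm_compression_le [DecidableEq κ] {e : Matrix ι κ 𝕜} (he : eᴴ * e = 1)
    (a : Matrix ι ι 𝕜) : ‖eᴴ * a * e‖ ≤ ‖a‖ := by
  rw [← frobenius_norm_conjTranspose (eᴴ * a * e), conjTranspose_mul, conjTranspose_mul,
    conjTranspose_conjTranspose]
  refine (frobenius_norm_conjTranspose_mul_le_of_isometry he _).trans ?_
  rw [← frobenius_norm_conjTranspose (aᴴ * e), conjTranspose_mul, conjTranspose_conjTranspose]
  exact frobenius_norm_conjTranspose_mul_le_of_isometry he a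

lemma frobenius_parallelogram (a b : Matrix ι κ 𝕜) :
    ‖a + b‖ ^ 2 + ‖a - b‖ ^ 2 = 2 * (‖a‖ ^ 2 + ‖b‖ ^ 2) := by
  simp only [frobenius_norm_sq_eq_sum, Finset.mul_sum, ← Finset.sum_add_distrib]
  refine Finset.sum_congr rfl fun i _ => Finset.sum_congr rfl fun j _ => ?_
  rw [Matrix.add_apply, Matrix.sub_apply]
  simpa only [sq] using parallelogram_law_with_norm ℝ (a i j) (b i j)

/-- The skew-Hermitian part of a square matrix. -/
def skewPart (a : Matrix ι ι 𝕜) : Matrix ι ι 𝕜 := (2⁻¹ : ℝ) • (a - aᴴ)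

lemma conjTranspose_skewPart {ι : Type*} (a : Matrix ι ι 𝕜) : (skewPart a)ᴴ = -skewPart a := by
  simp only [skewPart, conjTranspose_smul, star_trivial, conjTranspose_sub,
    conjTranspose_conjTranspose, ← smul_neg, neg_sub]

lemma conjTranspose_smul_skewPart {ι : Type*} (r : ℝ) (a : Matrix ι ι 𝕜) :
    (r • skewPart a)ᴴ = -(r • skewPart a) := by
  rw [conjTranspose_smul, conjTranspose_skewPart, star_trivial, smul_neg]

lemma skewPart_compression {κ : Type*} (e : Matrix ι κ 𝕜) (a : Matrix ι ι 𝕜) :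
    skewPart (eᴴ * a * e) = eᴴ * skewPart a * e := by
  simp only [skewPart, conjTranspose_mul, conjTranspose_conjTranspose, Matrix.mul_sub,
    Matrix.sub_mul, Matrix.mul_smul, Matrix.smul_mul, Matrix.mul_assoc]

lemma skewPart_one_add {ι : Type*} [DecidableEq ι] (a : Matrix ι ι 𝕜) :
    skewPart (1 + a) = skewPart a := by
  simp only [skewPart, conjTranspose_add, conjTranspose_one, add_sub_add_left_eq_sub]

lemma skewPart_neg {ι : Type*} (a : Matrix ι ι 𝕜) : skewPart (-a) = -skewPart a := by
  rw [skewPart, skewPart, conjTranspose_neg, ← smul_neg]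
  congr 1
  abel

lemma frobenius_norm_skewPart_sq (a : Matrix ι ι 𝕜) :
    ‖skewPart a‖ ^ 2 = ‖a‖ ^ 2 - ‖a + aᴴ‖ ^ 2 / 4 := by
  have h := frobenius_parallelogram a aᴴ
  rw [frobenius_norm_conjTranspose] at h
  rw [skewPart, norm_smul, mul_pow]
  norm_num
  linarith

lemma frobenius_norm_skewPart_le (a : Matrix ι ι 𝕜) : ‖skewPart a‖ ≤ ‖a‖ :=
  le_of_sq_le_sq ((frobenius_norm_skewPart_sq a).trans_le (sub_le_self _ (by positivity)))
    (norm_nonneg _)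

end Frobenius

section Cayley

open scoped Matrix.Norms.Frobenius ComplexOrder

variable {𝕜 ι : Type*} [RCLike 𝕜] [Fintype ι] [DecidableEq ι]

lemma frobenius_norm_mul_unitary (a : Matrix ι ι 𝕜) {u : Matrix ι ι 𝕜}
    (hu : u ∈ unitaryGroup ι 𝕜) : ‖a * u‖ = ‖a‖ := by
  have hu' : uᴴᴴ * uᴴ = 1 := by
    rw [conjTranspose_conjTranspose]
    exact mem_unitaryGroup_iff.1 hu
  rw [← frobenius_norm_conjTranspose, conjTranspose_mul, frobenius_norm_mul_of_isometry hu',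
    frobenius_norm_conjTranspose]

lemma frobenius_norm_of_unitary {u : Matrix ι ι 𝕜} (hu : u ∈ unitaryGroup ι 𝕜) :
    ‖u‖ ^ 2 = Fintype.card ι := by
  rw [frobenius_norm_sq_eq_re_trace_mul_conjTranspose, ← star_eq_conjTranspose,
    mem_unitaryGroup_iff.1 hu, trace_one, RCLike.natCast_re]

lemma one_sub_add_conjTranspose_of_unitary {u : Matrix ι ι 𝕜} (hu : u ∈ unitaryGroup ι 𝕜) :
    (1 - u) + (1 - u)ᴴ = (1 - u) * (1 - u)ᴴ := by
  have huu : u * uᴴ = 1 := mem_unitaryGroup_iff.1 hu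
  rw [conjTranspose_sub, conjTranspose_one]
  calc (1 - u) + (1 - uᴴ) = 1 - u - uᴴ + u * uᴴ := by rw [huu]; abel
    _ = (1 - u) * (1 - uᴴ) := by noncomm_ring

lemma frobenius_norm_one_sub_sq_of_unitary {u : Matrix ι ι 𝕜} (hu : u ∈ unitaryGroup ι 𝕜) :
    ‖1 - u‖ ^ 2 = 2 * RCLike.re (trace (1 - u)) := by
  rw [frobenius_norm_sq_eq_re_trace_mul_conjTranspose, ← one_sub_add_conjTranspose_of_unitary hu,
    trace_add, map_add, re_trace_conjTranspose, two_mul]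

lemma frobenius_norm_skewPart_sq_ge {u : Matrix ι ι 𝕜} (hu : u ∈ unitaryGroup ι 𝕜) :
    ‖1 - u‖ ^ 2 * (1 - ‖1 - u‖ ^ 2 / 4) ≤ ‖skewPart (1 - u)‖ ^ 2 := by
  have h : ‖1 - u + (1 - u)ᴴ‖ ≤ ‖1 - u‖ ^ 2 := by
    rw [one_sub_add_conjTranspose_of_unitary hu, sq]
    exact (frobenius_norm_mul _ _).trans_eq (by rw [frobenius_norm_conjTranspose])
  have h' := pow_le_pow_left₀ (norm_nonneg _) h 2
  rw [frobenius_norm_skewPart_sq]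
  linarith

lemma re_trace_one_sub_mul_nonneg {u N : Matrix ι ι 𝕜} (hu : u ∈ unitaryGroup ι 𝕜)
    (hN : N.PosSemidef) : 0 ≤ RCLike.re (trace ((1 - u) * N)) := by
  have hconj : RCLike.re (trace ((1 - u)ᴴ * N)) = RCLike.re (trace ((1 - u) * N)) := by
    rw [← re_trace_conjTranspose, conjTranspose_mul, conjTranspose_conjTranspose,
      hN.isHermitian.eq, trace_mul_comm]
  have hpos : 0 ≤ RCLike.re (trace ((1 - u) * (1 - u)ᴴ * N)) := by
    rw [Matrix.mul_assoc, trace_mul_comm]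
    exact (RCLike.nonneg_iff.1 (hN.conjTranspose_mul_mul_same (1 - u)).trace_nonneg).1
  rw [← one_sub_add_conjTranspose_of_unitary hu, Matrix.add_mul, trace_add, map_add, hconj] at hpos
  linarith

/-- The Cayley transform, which maps skew-Hermitian matrices to unitary ones. Its value is
meaningless if `1 + h` is singular. -/
def cayley (h : Matrix ι ι 𝕜) : Matrix ι ι 𝕜 := (1 - h) * (1 + h)⁻¹

lemma isUnit_det_one_add_of_skew {h : Matrix ι ι 𝕜} (hh : hᴴ = -h) : IsUnit (1 + h).det := by
  have hfact : (1 + h) * (1 - h) = 1 + h * hᴴ := by rw [hh]; noncomm_ring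
  have hpos : (1 + h * hᴴ).PosDef :=
    PosDef.one.add_posSemidef (posSemidef_self_mul_conjTranspose h)
  have hunit := (isUnit_iff_isUnit_det _).1 hpos.isUnit
  rw [← hfact, det_mul] at hunit
  exact isUnit_of_mul_isUnit_left hunit

lemma cayley_mem_unitaryGroup {h : Matrix ι ι 𝕜} (hh : hᴴ = -h) :
    cayley h ∈ unitaryGroup ι 𝕜 := by
  have hx := isUnit_det_one_add_of_skew hh
  have hy : IsUnit (1 - h).det := by
    rw [sub_eq_add_neg]
    exact isUnit_det_one_add_of_skew (by rw [conjTranspose_neg, hh])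
  have hcomm : (1 - h) * (1 + h) = (1 + h) * (1 - h) := by noncomm_ring
  have hstar : star (cayley h) = (1 - h)⁻¹ * (1 + h) := by
    rw [star_eq_conjTranspose, cayley, conjTranspose_mul, conjTranspose_nonsing_inv,
      conjTranspose_add, conjTranspose_sub, conjTranspose_one, hh, sub_neg_eq_add, sub_eq_add_neg]
  rw [mem_unitaryGroup_iff, hstar, cayley]
  calc (1 - h) * (1 + h)⁻¹ * ((1 - h)⁻¹ * (1 + h))
      = (1 - h) * ((1 + h)⁻¹ * (1 - h)⁻¹) * (1 + h) := by simp only [Matrix.mul_assoc]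
    _ = (1 - h) * ((1 - h)⁻¹ * (1 + h)⁻¹) * (1 + h) := by
        rw [← Matrix.mul_inv_rev, hcomm, Matrix.mul_inv_rev]
    _ = 1 := by
        rw [← Matrix.mul_assoc, mul_nonsing_inv _ hy, Matrix.one_mul, nonsing_inv_mul _ hx]

lemma one_sub_cayley {h : Matrix ι ι 𝕜} (hh : hᴴ = -h) :
    1 - cayley h = (2 : ℝ) • (h * (1 + h)⁻¹) := by
  calc 1 - cayley h = (1 + h) * (1 + h)⁻¹ - (1 - h) * (1 + h)⁻¹ := by
        rw [mul_nonsing_inv _ (isUnit_det_one_add_of_skew hh), cayley]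
    _ = (2 : ℝ) • (h * (1 + h)⁻¹) := by rw [two_smul]; noncomm_ring

/-- This follows from `‖h‖² = ‖f (1 + h)‖² = ‖f‖² + ‖f h‖²` with `f = h (1 + h)⁻¹`. -/
lemma frobenius_norm_sq_le_mul_one_sub_cayley {h : Matrix ι ι 𝕜} (hh : hᴴ = -h) :
    4 * ‖h‖ ^ 2 ≤ ‖1 - cayley h‖ ^ 2 * (1 + ‖h‖ ^ 2) := by
  set f := h * (1 + h)⁻¹ with hf
  have hfh : h = f + f * h := by
    rw [← mul_one_add, hf, Matrix.mul_assoc,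
      nonsing_inv_mul _ (isUnit_det_one_add_of_skew hh), Matrix.mul_one]
  have hpyth : ‖h‖ ^ 2 = ‖f‖ ^ 2 + ‖f * h‖ ^ 2 := by
    have hexp : h * hᴴ = f * fᴴ + (f * h) * (f * h)ᴴ := by
      calc h * hᴴ = (f + f * h) * (f + f * h)ᴴ := by rw [← hfh]
        _ = _ := by
          rw [conjTranspose_add, conjTranspose_mul f h, hh]
          noncomm_ring
    simp only [frobenius_norm_sq_eq_re_trace_mul_conjTranspose, hexp, trace_add, map_add]
  have hmul : ‖f * h‖ ^ 2 ≤ ‖f‖ ^ 2 * ‖h‖ ^ 2 := by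
    rw [← mul_pow]
    exact pow_le_pow_left₀ (norm_nonneg _) (frobenius_norm_mul f h) 2
  rw [one_sub_cayley hh, norm_smul, mul_pow, ← hf]
  norm_num
  linarith

/-- Multiplying `b = 1 - N + 2h` by `cayley h` increases the real part of its trace, because
`tr (cayley h - 1) b = tr (1 - cayley h) + tr (1 - cayley h) N - 4 tr h`. -/
lemma two_mul_norm_sq_div_le_re_trace_cayley {h N : Matrix ι ι 𝕜} (hh : hᴴ = -h)
    (hN : N.PosSemidef) : 2 * ‖h‖ ^ 2 / (1 + ‖h‖ ^ 2) ≤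
      RCLike.re (trace ((cayley h - 1) * (1 - N + (2 : ℝ) • h))) := by
  have hu := cayley_mem_unitaryGroup hh
  have hmul : (1 - cayley h) * h = (2 : ℝ) • h - (1 - cayley h) := by
    have h1 : (1 - cayley h) * (1 + h) = (2 : ℝ) • h := by
      rw [one_sub_cayley hh, Matrix.smul_mul, Matrix.mul_assoc,
        nonsing_inv_mul _ (isUnit_det_one_add_of_skew hh), Matrix.mul_one]
    rw [← h1, mul_one_add, add_sub_cancel_left]
  have htrace : (cayley h - 1) * (1 - N + (2 : ℝ) • h) =
      (1 - cayley h) + (1 - cayley h) * N - (4 : ℝ) • h := by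
    calc (cayley h - 1) * (1 - N + (2 : ℝ) • h)
        = -((1 - cayley h) * (1 - N + (2 : ℝ) • h)) := by rw [← Matrix.neg_mul, neg_sub]
      _ = -(1 - cayley h) + (1 - cayley h) * N - (2 : ℝ) • ((1 - cayley h) * h) := by
          rw [Matrix.mul_add, Matrix.mul_sub, Matrix.mul_one, Matrix.mul_smul]
          abel
      _ = _ := by rw [hmul]; module
  have hgain := frobenius_norm_sq_le_mul_one_sub_cayley hh
  have hnorm := frobenius_norm_one_sub_sq_of_unitary hu
  have hNpos := re_trace_one_sub_mul_nonneg hu hN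
  rw [htrace, trace_sub, trace_add, trace_smul, map_sub, map_add, RCLike.smul_re,
    re_trace_eq_zero_of_skew hh, div_le_iff₀ (by positivity)]
  nlinarith [sq_nonneg ‖h‖]

end Cayley

section IsometryExtension

open scoped Matrix.Norms.Frobenius ComplexOrder

variable {𝕜 ι κ : Type*} [RCLike 𝕜] [Fintype ι] [DecidableEq ι] [Fintype κ] [DecidableEq κ]

/-- For an isometry `e`, the operator acting as `u` on the range of `e` (identified with its
source through `e`) and as the identity on the orthogonal complement. -/
def isometryExtend (e : Matrix ι κ 𝕜) (u : Matrix κ κ 𝕜) : Matrix ι ι 𝕜 := 1 + e * (u - 1) * eᴴ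

lemma isometryExtend_one {ι : Type*} [DecidableEq ι] (e : Matrix ι κ 𝕜) :
    isometryExtend e 1 = 1 := by
  rw [isometryExtend, sub_self, Matrix.mul_zero, Matrix.zero_mul, add_zero]

lemma conjTranspose_isometryExtend {ι : Type*} [DecidableEq ι] (e : Matrix ι κ 𝕜)
    (u : Matrix κ κ 𝕜) : (isometryExtend e u)ᴴ = isometryExtend e uᴴ := by
  simp only [isometryExtend, conjTranspose_add, conjTranspose_one, conjTranspose_mul,
    conjTranspose_sub, conjTranspose_conjTranspose, Matrix.mul_assoc]

lemma isometryExtend_mul {e : Matrix ι κ 𝕜} (he : eᴴ * e = 1) (u v : Matrix κ κ 𝕜) :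
    isometryExtend e (u * v) = isometryExtend e u * isometryExtend e v := by
  have hblock : e * (u - 1) * eᴴ * (e * (v - 1) * eᴴ) = e * ((u - 1) * (v - 1)) * eᴴ := by
    calc e * (u - 1) * eᴴ * (e * (v - 1) * eᴴ)
        = e * (u - 1) * (eᴴ * e) * ((v - 1) * eᴴ) := by simp only [Matrix.mul_assoc]
      _ = e * ((u - 1) * (v - 1)) * eᴴ := by rw [he, Matrix.mul_one]; simp only [Matrix.mul_assoc]
  have huv : u * v - 1 = (u - 1) + (v - 1) + (u - 1) * (v - 1) := by noncomm_ring
  simp only [isometryExtend, huv, Matrix.mul_add, Matrix.add_mul, Matrix.mul_one, Matrix.one_mul,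
    hblock]
  abel

lemma isometryExtend_mem_unitaryGroup {e : Matrix ι κ 𝕜} (he : eᴴ * e = 1) {u : Matrix κ κ 𝕜}
    (hu : u ∈ unitaryGroup κ 𝕜) : isometryExtend e u ∈ unitaryGroup ι 𝕜 := by
  rw [mem_unitaryGroup_iff, star_eq_conjTranspose, conjTranspose_isometryExtend,
    ← isometryExtend_mul he, ← star_eq_conjTranspose, mem_unitaryGroup_iff.1 hu,
    isometryExtend_one]

lemma trace_isometryExtend_mul (e : Matrix ι κ 𝕜) (u : Matrix κ κ 𝕜) (w : Matrix ι ι 𝕜) :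
    trace (isometryExtend e u * w) = trace w + trace ((u - 1) * (eᴴ * w * e)) := by
  rw [isometryExtend, Matrix.add_mul, Matrix.one_mul, trace_add, Matrix.mul_assoc,
    Matrix.mul_assoc, trace_mul_comm e]
  simp only [Matrix.mul_assoc]

lemma frobenius_norm_sub_eq_of_unitary {x : Matrix ι ι 𝕜} (hx : x ∈ unitaryGroup ι 𝕜)
    (y : Matrix ι ι 𝕜) : ‖x - y‖ = ‖1 - y * xᴴ‖ := by
  have h : 1 - y * xᴴ = (x - y) * xᴴ := by
    rw [Matrix.sub_mul]
    congr 1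
    exact (mem_unitaryGroup_iff.1 hx).symm
  rw [h, ← star_eq_conjTranspose, frobenius_norm_mul_unitary _ (Unitary.star_mem hx)]

/-- The rotation `u` of the source of the isometry `e` for which `isometryExtend e u * y` is to be
brought close to `x`. -/
def aligner (e : Matrix ι κ 𝕜) (x y : Matrix ι ι 𝕜) : Matrix κ κ 𝕜 :=
  cayley ((2⁻¹ : ℝ) • skewPart (eᴴ * (y * xᴴ) * e))

lemma aligner_mem_unitaryGroup {ι : Type*} [Fintype ι] (e : Matrix ι κ 𝕜)
    (x y : Matrix ι ι 𝕜) : aligner e x y ∈ unitaryGroup κ 𝕜 :=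
  cayley_mem_unitaryGroup (conjTranspose_smul_skewPart _ _)

lemma compression_eq_of_unitary {κ : Type*} [DecidableEq κ] {e : Matrix ι κ 𝕜} (he : eᴴ * e = 1)
    {w : Matrix ι ι 𝕜} (hw : w ∈ unitaryGroup ι 𝕜) : eᴴ * w * e =
      1 - (2⁻¹ : ℝ) • (eᴴ * (1 - w) * (eᴴ * (1 - w))ᴴ) + skewPart (eᴴ * w * e) := by
  have hgram : eᴴ * (1 - w) * (eᴴ * (1 - w))ᴴ = eᴴ * ((1 - w) + (1 - w)ᴴ) * e := by
    rw [one_sub_add_conjTranspose_of_unitary hw]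
    simp only [conjTranspose_mul, conjTranspose_conjTranspose, Matrix.mul_assoc]
  have hexpand : eᴴ * ((1 - w) + (1 - w)ᴴ) * e = (2 : ℝ) • 1 - (eᴴ * w * e + eᴴ * wᴴ * e) := by
    rw [conjTranspose_sub, conjTranspose_one, two_smul, ← he]
    simp only [Matrix.mul_add, Matrix.mul_sub, Matrix.add_mul, Matrix.sub_mul, Matrix.mul_one]
    abel
  rw [hgram, hexpand, skewPart_compression, skewPart, Matrix.mul_smul, Matrix.smul_mul,
    Matrix.mul_sub, Matrix.sub_mul]
  module

lemma norm_sq_div_le_re_trace_aligner {e : Matrix ι κ 𝕜} (he : eᴴ * e = 1) {w : Matrix ι ι 𝕜}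
    (hw : w ∈ unitaryGroup ι 𝕜) {h : Matrix κ κ 𝕜} (hh : h = (2⁻¹ : ℝ) • skewPart (eᴴ * w * e)) :
    2 * ‖h‖ ^ 2 / (1 + ‖h‖ ^ 2) ≤ RCLike.re (trace ((cayley h - 1) * (eᴴ * w * e))) := by
  have hN : ((2⁻¹ : ℝ) • (eᴴ * (1 - w) * (eᴴ * (1 - w))ᴴ)).PosSemidef :=
    (posSemidef_self_mul_conjTranspose _).smul (by norm_num)
  have hskew : skewPart (eᴴ * w * e) = (2 : ℝ) • h := by
    rw [hh, smul_smul, mul_inv_cancel₀ two_ne_zero, one_smul]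
  rw [compression_eq_of_unitary he hw, hskew]
  exact two_mul_norm_sq_div_le_re_trace_cayley (hh ▸ conjTranspose_smul_skewPart _ _) hN

lemma norm_sub_isometryExtend_mul_sq {e : Matrix ι κ 𝕜} (he : eᴴ * e = 1) {u : Matrix κ κ 𝕜}
    (hu : u ∈ unitaryGroup κ 𝕜) {x y : Matrix ι ι 𝕜} (hx : x ∈ unitaryGroup ι 𝕜)
    (hy : y ∈ unitaryGroup ι 𝕜) : ‖x - isometryExtend e u * y‖ ^ 2 =
      ‖x - y‖ ^ 2 - 2 * RCLike.re (trace ((u - 1) * (eᴴ * (y * xᴴ) * e))) := by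
  have hw : y * xᴴ ∈ unitaryGroup ι 𝕜 := mul_mem hy (Unitary.star_mem hx)
  rw [frobenius_norm_sub_eq_of_unitary hx, frobenius_norm_sub_eq_of_unitary hx, Matrix.mul_assoc,
    frobenius_norm_one_sub_sq_of_unitary hw, frobenius_norm_one_sub_sq_of_unitary
      (mul_mem (isometryExtend_mem_unitaryGroup he hu) hw), trace_sub, trace_sub,
    trace_isometryExtend_mul]
  simp only [map_sub, map_add]
  ring

lemma norm_sub_isometryExtend_aligner_sq_le {e : Matrix ι κ 𝕜} (he : eᴴ * e = 1)
    {x y : Matrix ι ι 𝕜} (hx : x ∈ unitaryGroup ι 𝕜) (hy : y ∈ unitaryGroup ι 𝕜) :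
    ‖x - isometryExtend e (aligner e x y) * y‖ ^ 2 ≤ ‖x - y‖ ^ 2 -
      ‖eᴴ * skewPart (y * xᴴ) * e‖ ^ 2 / (1 + ‖eᴴ * skewPart (y * xᴴ) * e‖ ^ 2 / 4) := by
  have hgain := norm_sq_div_le_re_trace_aligner he (mul_mem hy (Unitary.star_mem hx)) rfl
  have hhalf : ‖(2⁻¹ : ℝ) • skewPart (eᴴ * (y * xᴴ) * e)‖ ^ 2 =
      ‖eᴴ * skewPart (y * xᴴ) * e‖ ^ 2 / 4 := by
    rw [skewPart_compression, norm_smul, mul_pow, Real.norm_of_nonneg (by norm_num)]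
    ring
  rw [norm_sub_isometryExtend_mul_sq he (aligner_mem_unitaryGroup e x y) hx hy]
  rw [star_eq_conjTranspose, hhalf] at hgain
  refine sub_le_sub_left ?_ _
  calc ‖eᴴ * skewPart (y * xᴴ) * e‖ ^ 2 / (1 + ‖eᴴ * skewPart (y * xᴴ) * e‖ ^ 2 / 4)
      = 2 * (2 * (‖eᴴ * skewPart (y * xᴴ) * e‖ ^ 2 / 4) /
          (1 + ‖eᴴ * skewPart (y * xᴴ) * e‖ ^ 2 / 4)) := by ring
    _ ≤ _ := mul_le_mul_of_nonneg_left hgain two_pos.le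

lemma norm_sub_isometryExtend_aligner_le {e : Matrix ι κ 𝕜} (he : eᴴ * e = 1)
    {x y : Matrix ι ι 𝕜} (hx : x ∈ unitaryGroup ι 𝕜) (hy : y ∈ unitaryGroup ι 𝕜) :
    ‖x - isometryExtend e (aligner e x y) * y‖ ≤ ‖x - y‖ :=
  le_of_sq_le_sq ((norm_sub_isometryExtend_aligner_sq_le he hx hy).trans
    (sub_le_self _ (by positivity))) (norm_nonneg _)

lemma sum_norm_sub_isometryExtend_aligner_sq_le {α : Type*} {s : Finset α}
    {e : α → Matrix ι κ 𝕜} (he : ∀ p ∈ s, (e p)ᴴ * e p = 1)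
    (hs : ∀ a : Matrix ι ι 𝕜, ‖a‖ ^ 2 ≤ ∑ p ∈ s, ‖(e p)ᴴ * a * e p‖ ^ 2)
    {x y : Matrix ι ι 𝕜} (hx : x ∈ unitaryGroup ι 𝕜) (hy : y ∈ unitaryGroup ι 𝕜) :
    ∑ p ∈ s, ‖x - isometryExtend (e p) (aligner (e p) x y) * y‖ ^ 2 ≤
      s.card * ‖x - y‖ ^ 2 -
        ‖x - y‖ ^ 2 * (1 - ‖x - y‖ ^ 2 / 4) / (1 + ‖x - y‖ ^ 2 / 4) := by
  set a := skewPart (y * xᴴ)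
  have hnorm := frobenius_norm_sub_eq_of_unitary hx y
  have hneg : ‖skewPart (1 - y * xᴴ)‖ = ‖a‖ := by
    rw [sub_eq_add_neg, skewPart_one_add, skewPart_neg, norm_neg]
  have hlower : ‖x - y‖ ^ 2 * (1 - ‖x - y‖ ^ 2 / 4) ≤ ‖a‖ ^ 2 := by
    rw [hnorm, ← hneg]
    exact frobenius_norm_skewPart_sq_ge (mul_mem hy (Unitary.star_mem hx))
  have hupper : ∀ p ∈ s, ‖(e p)ᴴ * a * e p‖ ^ 2 ≤ ‖x - y‖ ^ 2 := fun p hp => by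
    refine pow_le_pow_left₀ (norm_nonneg _)
      ((frobenius_norm_compression_le (he p hp) a).trans ?_) 2
    rw [hnorm, ← hneg]
    exact frobenius_norm_skewPart_le _
  calc ∑ p ∈ s, ‖x - isometryExtend (e p) (aligner (e p) x y) * y‖ ^ 2
      ≤ ∑ p ∈ s, (‖x - y‖ ^ 2 - ‖(e p)ᴴ * a * e p‖ ^ 2 / (1 + ‖x - y‖ ^ 2 / 4)) := by
        refine Finset.sum_le_sum fun p hp =>
          (norm_sub_isometryExtend_aligner_sq_le (he p hp) hx hy).trans ?_
        exact sub_le_sub_left (div_le_div_of_nonneg_left (sq_nonneg _) (by positivity)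
          (by linarith [hupper p hp])) _
    _ = s.card * ‖x - y‖ ^ 2 - (∑ p ∈ s, ‖(e p)ᴴ * a * e p‖ ^ 2) / (1 + ‖x - y‖ ^ 2 / 4) := by
        rw [Finset.sum_sub_distrib, ← Finset.sum_div, Finset.sum_const, nsmul_eq_mul]
    _ ≤ _ := by
        gcongr
        exact hlower.trans (hs a)

end IsometryExtension

section CoordinatePairs

open scoped Matrix.Norms.Frobenius

variable {n : ℕ}

lemma mem_pairs {p : Fin n × Fin n} : p ∈ pairs n ↔ p.1 < p.2 := by
  simp only [pairs, Finset.mem_filter, Finset.mem_univ, true_and]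

lemma sum_pairs_add_swap_add_sum_diag {M : Type*} [AddCommMonoid M] (f : Fin n → Fin n → M) :
    ∑ p ∈ pairs n, (f p.1 p.2 + f p.2 p.1) + ∑ i, f i i = ∑ i, ∑ j, f i j := by
  have hlt : ∑ p ∈ pairs n, f p.1 p.2 = ∑ i, ∑ j, if i < j then f i j else 0 := by
    rw [pairs, Finset.sum_filter, ← Finset.univ_product_univ, Finset.sum_product]
  have hgt : ∑ p ∈ pairs n, f p.2 p.1 = ∑ i, ∑ j, if j < i then f i j else 0 := by
    rw [pairs, Finset.sum_filter, ← Finset.univ_product_univ, Finset.sum_product, Finset.sum_comm]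
  have heq : ∑ i, f i i = ∑ i, ∑ j, if i = j then f i j else 0 := by
    simp only [Finset.sum_ite_eq, Finset.mem_univ, if_true]
  rw [Finset.sum_add_distrib, hlt, hgt, heq]
  simp only [← Finset.sum_add_distrib]
  refine Finset.sum_congr rfl fun i _ => Finset.sum_congr rfl fun j _ => ?_
  rcases lt_trichotomy i j with h | rfl | h
  · simp [h, h.not_gt, h.ne]
  · simp
  · simp [h, h.not_gt, h.ne']

lemma card_pairs (n : ℕ) : (pairs n).card = n.choose 2 := by
  have h := sum_pairs_add_swap_add_sum_diag (n := n) fun _ _ => (1 : ℝ)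
  simp only [Finset.sum_const, nsmul_eq_mul, Finset.card_univ, Fintype.card_fin] at h
  rw [← Nat.cast_inj (R := ℝ), Nat.cast_choose_two]
  linarith

/-- The isometry `ℂ² → ℂⁿ` sending the standard basis to `e_i, e_j`, as a matrix. -/
def pairInclusion (i j : Fin n) : Matrix (Fin n) (Fin 2) ℂ :=
  Matrix.of fun k a => if k = ![i, j] a then 1 else 0

lemma compression_pairInclusion (i j : Fin n) (a : Matrix (Fin n) (Fin n) ℂ) :
    (pairInclusion i j)ᴴ * a * pairInclusion i j = a.submatrix ![i, j] ![i, j] := by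
  ext b c
  simp only [Matrix.mul_apply, conjTranspose_apply, pairInclusion, of_apply, apply_ite star,
    star_one, star_zero, ite_mul, one_mul, zero_mul, mul_ite, mul_one, mul_zero,
    Finset.sum_ite_eq', Finset.mem_univ, if_true, submatrix_apply]

lemma pairInclusion_isometry {i j : Fin n} (h : i ≠ j) :
    (pairInclusion i j)ᴴ * pairInclusion i j = 1 := by
  rw [← Matrix.mul_one (pairInclusion i j)ᴴ, compression_pairInclusion]
  refine submatrix_one _ fun a b hab => ?_
  fin_cases a <;> fin_cases b <;> simp_all [h.symm]

lemma embed2_eq_isometryExtend {i j : Fin n} (h : i ≠ j) (u : Matrix (Fin 2) (Fin 2) ℂ) :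
    embed2 i j u = isometryExtend (pairInclusion i j) u := by
  ext k l
  by_cases hki : k = i <;> by_cases hkj : k = j <;> by_cases hli : l = i <;>
    by_cases hlj : l = j <;> subst_vars <;>
    simp_all [embed2, isometryExtend, pairInclusion, Matrix.mul_apply, Fin.sum_univ_two,
      Matrix.one_apply, eq_comm]

lemma norm_sq_compression_pairInclusion (i j : Fin n) (a : Matrix (Fin n) (Fin n) ℂ) :
    ‖(pairInclusion i j)ᴴ * a * pairInclusion i j‖ ^ 2 =
      (‖a i j‖ ^ 2 + ‖a j i‖ ^ 2) + (‖a i i‖ ^ 2 + ‖a j j‖ ^ 2) := by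
  simp only [frobenius_norm_sq_eq_sum, compression_pairInclusion, submatrix_apply,
    Fin.sum_univ_two, cons_val_zero, cons_val_one]
  ring

/-- Off-diagonal entries of `a` are counted once, diagonal ones `n - 1` times. -/
lemma norm_sq_le_sum_pairs_compression (hn : 2 ≤ n) (a : Matrix (Fin n) (Fin n) ℂ) :
    ‖a‖ ^ 2 ≤ ∑ p ∈ pairs n, ‖(pairInclusion p.1 p.2)ᴴ * a * pairInclusion p.1 p.2‖ ^ 2 := by
  have hdiag := sum_pairs_add_swap_add_sum_diag fun i (_ : Fin n) => ‖a i i‖ ^ 2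
  simp only [Finset.sum_const, Finset.card_univ, Fintype.card_fin, nsmul_eq_mul,
    ← Finset.mul_sum] at hdiag
  rw [frobenius_norm_sq_eq_sum, ← sum_pairs_add_swap_add_sum_diag fun i j => ‖a i j‖ ^ 2]
  simp only [norm_sq_compression_pairInclusion, Finset.sum_add_distrib] at hdiag ⊢
  have hn' : (2 : ℝ) ≤ n := by exact_mod_cast hn
  have hpos : 0 ≤ ∑ i, ‖a i i‖ ^ 2 := by positivity
  nlinarith

lemma one_sub_div_one_add_ge {n d : ℝ} (hn : 2 ≤ n) (hd : 0 ≤ d) (hdn : d ≤ 2 / n) :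
    (n - 1) / n ≤ (1 - d / 4) / (1 + d / 4) := by
  have hdn' : d * n ≤ 2 := by rwa [le_div_iff₀ (by linarith)] at hdn
  rw [div_le_div_iff₀ (by linarith) (by linarith)]
  nlinarith

lemma sum_pairs_norm_sub_embed2_aligner_sq_le (hn : 2 ≤ n) {x y : Matrix (Fin n) (Fin n) ℂ}
    (hx : x ∈ unitaryGroup (Fin n) ℂ) (hy : y ∈ unitaryGroup (Fin n) ℂ)
    (hxy : ‖x - y‖ ^ 2 ≤ 2 / n) :
    ∑ p ∈ pairs n, ‖x - embed2 p.1 p.2 (aligner (pairInclusion p.1 p.2) x y) * y‖ ^ 2 ≤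
      n.choose 2 * ((1 - 2 / n ^ 2) * ‖x - y‖ ^ 2) := by
  have hn' : (2 : ℝ) ≤ n := by exact_mod_cast hn
  have hfactor := one_sub_div_one_add_ge hn' (sq_nonneg ‖x - y‖) hxy
  calc ∑ p ∈ pairs n, ‖x - embed2 p.1 p.2 (aligner (pairInclusion p.1 p.2) x y) * y‖ ^ 2
      = ∑ p ∈ pairs n, ‖x - isometryExtend (pairInclusion p.1 p.2)
          (aligner (pairInclusion p.1 p.2) x y) * y‖ ^ 2 :=
        Finset.sum_congr rfl fun p hp => by rw [embed2_eq_isometryExtend (mem_pairs.1 hp).ne]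
    _ ≤ n.choose 2 * ‖x - y‖ ^ 2 - ‖x - y‖ ^ 2 * ((n - 1) / n) := by
        refine (sum_norm_sub_isometryExtend_aligner_sq_le
          (fun p hp => pairInclusion_isometry (mem_pairs.1 hp).ne)
          (norm_sq_le_sum_pairs_compression hn) hx hy).trans ?_
        rw [card_pairs, mul_div_assoc]
        gcongr
    _ = n.choose 2 * ((1 - 2 / n ^ 2) * ‖x - y‖ ^ 2) := by
        rw [Nat.cast_choose_two]
        field_simp

end CoordinatePairs

section IntrinsicDistance

open scoped NNReal

variable {X : Type*} [PseudoEMetricSpace X] {S : Set X} {x : X}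

lemma pathLengthE_le_eVariationOn (γ : ℝ → X) :
    pathLengthE edist γ ≤ eVariationOn γ (Set.Icc 0 1) := by
  refine iSup_le fun k => iSup_le fun t => iSup_le fun ht => iSup_le fun h0 => iSup_le fun h1 => ?_
  let u : ℕ → ℝ := fun i => t ⟨min i k, by omega⟩
  have hu : Monotone u := fun i j hij => ht (by simp only [Fin.le_def]; omega)
  have hmem (i : ℕ) : u i ∈ Set.Icc (0 : ℝ) 1 :=
    ⟨h0 ▸ ht (Fin.zero_le _), h1 ▸ ht (Fin.le_last _)⟩
  calc ∑ i : Fin k, edist (γ (t i.castSucc)) (γ (t i.succ))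
      = ∑ i : Fin k, edist (γ (u (i + 1))) (γ (u i)) := by
        refine Finset.sum_congr rfl fun i _ => ?_
        rw [edist_comm]
        congr <;> ext <;> simp
    _ = ∑ i ∈ Finset.range k, edist (γ (u (i + 1))) (γ (u i)) :=
        Fin.sum_univ_eq_sum_range (fun i => edist (γ (u (i + 1))) (γ (u i))) k
    _ ≤ eVariationOn γ (Set.Icc 0 1) := eVariationOn.sum_le hu hmem

lemma sum_edist_le_pathLengthE (γ : ℝ → X) {k : ℕ} {v : ℕ → ℝ} (hv : Monotone v)
    (h0 : v 0 = 0) (h1 : v k = 1) :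
    ∑ i ∈ Finset.range k, edist (γ (v i)) (γ (v (i + 1))) ≤ pathLengthE edist γ := by
  rw [← Fin.sum_univ_eq_sum_range fun i => edist (γ (v i)) (γ (v (i + 1)))]
  exact le_iSup_of_le k <| le_iSup_of_le (fun i => v i) <|
    le_iSup_of_le (fun _ _ hij => hv hij) <| le_iSup_of_le h0 <| le_iSup_of_le h1 le_rfl

lemma eVariationOn_le_pathLengthE (γ : ℝ → X) :
    eVariationOn γ (Set.Icc 0 1) ≤ pathLengthE edist γ := by
  refine iSup_le fun ⟨k, u, hu, hmem⟩ => ?_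
  let v : ℕ → ℝ := fun i => if i = 0 then 0 else if i ≤ k + 1 then u (i - 1) else 1
  have hv : Monotone v := by
    refine monotone_nat_of_le_succ fun i => ?_
    have := hu (Nat.sub_le i 1)
    have := hmem i
    have := hmem (i - 1)
    simp only [v]
    split_ifs <;> grind
  calc ∑ i ∈ Finset.range k, edist (γ (u (i + 1))) (γ (u i))
      = ∑ i ∈ Finset.range k, edist (γ (v (i + 1))) (γ (v (i + 2))) := by
        refine Finset.sum_congr rfl fun i hi => ?_
        have := Finset.mem_range.1 hi
        rw [edist_comm]
        simp only [v]
        grind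
    _ ≤ ∑ i ∈ Finset.range (k + 2), edist (γ (v i)) (γ (v (i + 1))) := by
        rw [Finset.sum_range_succ', Finset.sum_range_succ]
        exact le_add_right (le_add_right le_rfl)
    _ ≤ pathLengthE edist γ := sum_edist_le_pathLengthE γ hv (by simp [v]) (by simp [v])

lemma pathLengthE_eq_eVariationOn (γ : ℝ → X) :
    pathLengthE edist γ = eVariationOn γ (Set.Icc 0 1) :=
  (pathLengthE_le_eVariationOn γ).antisymm (eVariationOn_le_pathLengthE γ)

lemma intrinsicDistE_le_of_lipschitz {γ : ℝ → X} {K : ℝ≥0} (hγ : LipschitzWith K γ)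
    (hS : ∀ s, γ s ∈ S) : intrinsicDistE edist S (γ 0) (γ 1) ≤ K := by
  refine iInf₂_le_of_le γ hγ.continuous.continuousOn <| iInf₂_le_of_le (fun s _ => hS s) rfl <|
    iInf_le_of_le rfl ?_
  calc pathLengthE edist γ = eVariationOn (γ ∘ id) (Set.Icc 0 1) := pathLengthE_eq_eVariationOn γ
    _ ≤ K * eVariationOn (id : ℝ → ℝ) (Set.Icc 0 1) :=
        (hγ.lipschitzOnWith (s := Set.univ)).comp_eVariationOn_le (Set.mapsTo_univ _ _)
    _ = K := by simp

lemma intrinsicDistE_self (hx : x ∈ S) : intrinsicDistE edist S x x = 0 := by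
  simpa using intrinsicDistE_le_of_lipschitz (γ := fun _ => x) (.const x) fun _ => hx

lemma exists_path_trans {γ₁ γ₂ : ℝ → X} (hc₁ : ContinuousOn γ₁ (Set.Icc 0 1))
    (hc₂ : ContinuousOn γ₂ (Set.Icc 0 1)) (hS₁ : Set.MapsTo γ₁ (Set.Icc 0 1) S)
    (hS₂ : Set.MapsTo γ₂ (Set.Icc 0 1) S) (h : γ₁ 1 = γ₂ 0) :
    ∃ γ : ℝ → X, ContinuousOn γ (Set.Icc 0 1) ∧ Set.MapsTo γ (Set.Icc 0 1) S ∧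
      γ 0 = γ₁ 0 ∧ γ 1 = γ₂ 1 ∧
      eVariationOn γ (Set.Icc 0 1) ≤
        eVariationOn γ₁ (Set.Icc 0 1) + eVariationOn γ₂ (Set.Icc 0 1) := by
  let γ : ℝ → X := fun s => if s ≤ 1 / 2 then γ₁ (2 * s) else γ₂ (2 * s - 1)
  have hunion : Set.Icc (0 : ℝ) 1 = Set.Icc 0 (1 / 2) ∪ Set.Icc (1 / 2) 1 :=
    (Set.Icc_union_Icc_eq_Icc (by norm_num) (by norm_num)).symm
  have heq₁ : Set.EqOn γ (γ₁ ∘ fun s => 2 * s) (Set.Icc 0 (1 / 2)) := fun s hs => if_pos hs.2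
  have heq₂ : Set.EqOn γ (γ₂ ∘ fun s => 2 * s - 1) (Set.Icc (1 / 2) 1) := fun s hs => by
    rcases hs.1.eq_or_lt with rfl | hlt
    · simp [γ, h]
    · exact if_neg hlt.not_ge
  have hmaps₁ : Set.MapsTo (fun s : ℝ => 2 * s) (Set.Icc 0 (1 / 2)) (Set.Icc 0 1) :=
    fun s hs => ⟨by linarith [hs.1], by linarith [hs.2]⟩
  have hmaps₂ : Set.MapsTo (fun s : ℝ => 2 * s - 1) (Set.Icc (1 / 2) 1) (Set.Icc 0 1) :=
    fun s hs => ⟨by linarith [hs.1], by linarith [hs.2]⟩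
  refine ⟨γ, ?_, ?_, by simp [γ], by norm_num [γ], ?_⟩
  · rw [hunion]
    exact ((hc₁.comp (by fun_prop) hmaps₁).congr heq₁).union_of_isClosed
      ((hc₂.comp (by fun_prop) hmaps₂).congr heq₂) isClosed_Icc isClosed_Icc
  · rw [hunion]
    exact ((hS₁.comp hmaps₁).congr heq₁.symm).union ((hS₂.comp hmaps₂).congr heq₂.symm)
  · have hsplit := eVariationOn.Icc_add_Icc γ (s := Set.univ) (a := 0) (b := 1 / 2) (c := 1)
      (by norm_num) (by norm_num) trivial
    simp only [Set.univ_inter] at hsplit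
    rw [← hsplit, eVariationOn.congr heq₁, eVariationOn.congr heq₂]
    gcongr
    · exact eVariationOn.comp_le_of_monotoneOn γ₁ _ (fun a _ b _ hab => by gcongr)
        hmaps₁
    · exact eVariationOn.comp_le_of_monotoneOn γ₂ _ (fun a _ b _ hab => by gcongr)
        hmaps₂

lemma intrinsicDistE_triangle (x y z : X) :
    intrinsicDistE edist S x z ≤ intrinsicDistE edist S x y + intrinsicDistE edist S y z := by
  simp only [intrinsicDistE, pathLengthE_eq_eVariationOn, ENNReal.iInf_add, ENNReal.add_iInf,
    le_iInf_iff]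
  intro γ₂ hc₂ hS₂ h0₂ h1₂ γ₁ hc₁ hS₁ h0₁ h1₁
  obtain ⟨γ, hc, hS, h0, h1, hle⟩ := exists_path_trans hc₁ hc₂ hS₁ hS₂ (h1₁.trans h0₂.symm)
  exact (iInf₂_le_of_le γ hc <| iInf₂_le_of_le hS (h0.trans h0₁) <|
    iInf_le_of_le (h1.trans h1₂) le_rfl).trans hle

lemma intrinsicDistE_le_sum {z : ℕ → X} (h0 : z 0 ∈ S) (m : ℕ) :
    intrinsicDistE edist S (z 0) (z m) ≤
      ∑ k ∈ Finset.range m, intrinsicDistE edist S (z k) (z (k + 1)) := by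
  induction m with
  | zero => exact (intrinsicDistE_self h0).le
  | succ m ih =>
    rw [Finset.sum_range_succ]
    exact (intrinsicDistE_triangle _ (z m) _).trans (add_le_add_left ih _)

end IntrinsicDistance

section UnitaryFlow

variable {ι : Type*} [Fintype ι] [DecidableEq ι] {w x y : Matrix ι ι ℂ}

open scoped Matrix.Norms.L2Operator in
/-- The continuous functional calculus of normal matrices; it does not depend on the operator norm
used to construct it, hence can be combined with the Frobenius norm. -/
instance matrixContinuousFunctionalCalculus :
    ContinuousFunctionalCalculus ℂ (Matrix ι ι ℂ) IsStarNormal :=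
  inferInstance

open scoped Matrix.Norms.L2Operator in
lemma norm_eq_one_of_mem_spectrum_unitary {z : ℂ} (hw : w ∈ unitaryGroup ι ℂ)
    (hz : z ∈ spectrum ℂ w) : ‖z‖ = 1 :=
  spectrum.norm_eq_one_of_unitary hw hz

open scoped Matrix.Norms.Frobenius

lemma frobenius_norm_sq_cfc (f : ℂ → ℂ) :
    ‖cfc f w‖ ^ 2 = (trace (cfc (fun z => (‖f z‖ ^ 2 : ℂ)) w)).re := by
  have hcont (g : ℂ → ℂ) : ContinuousOn g (spectrum ℂ w) := w.finite_spectrum.continuousOn g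
  rw [frobenius_norm_sq_eq_re_trace_conjTranspose_mul, ← star_eq_conjTranspose, ← cfc_star,
    ← cfc_mul _ _ w (hcont _) (hcont _)]
  simp only [Complex.star_def, ← Complex.conj_mul', RCLike.re_eq_complex_re]

lemma frobenius_norm_cfc_le {f g : ℂ → ℂ}
    (h : ∀ z ∈ spectrum ℂ w, ‖f z‖ ≤ ‖g z‖) : ‖cfc f w‖ ≤ ‖cfc g w‖ := by
  have hcont (g : ℂ → ℂ) : ContinuousOn g (spectrum ℂ w) := w.finite_spectrum.continuousOn g
  let r : ℂ → ℂ := fun z => (√(‖g z‖ ^ 2 - ‖f z‖ ^ 2) : ℝ)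
  have hr : ‖cfc f w‖ ^ 2 + ‖cfc r w‖ ^ 2 = ‖cfc g w‖ ^ 2 := by
    simp only [frobenius_norm_sq_cfc]
    rw [← Complex.add_re, ← trace_add, ← cfc_add w _ _ (hcont _) (hcont _)]
    congr 2
    refine cfc_congr fun z hz => ?_
    have := h z hz
    have hnn : 0 ≤ ‖g z‖ ^ 2 - ‖f z‖ ^ 2 := by rw [sub_nonneg]; gcongr
    simp only [r, Complex.norm_real, ← Complex.ofReal_pow, ← Complex.ofReal_add]
    rw [Real.norm_eq_abs, sq_abs, Real.sq_sqrt hnn, add_sub_cancel]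
  exact (sq_le_sq₀ (norm_nonneg _) (norm_nonneg _)).1 (by linarith [sq_nonneg ‖cfc r w‖])

/-- The self-adjoint matrix whose eigenvalues are the principal arguments of those of the unitary
matrix `w`. -/
def argMatrix (w : Matrix ι ι ℂ) : Matrix ι ι ℂ :=
  cfc (fun z => (z.arg : ℂ)) w

/-- The one-parameter group of unitary matrices `exp (i s argMatrix w)`, joining the identity at
`s = 0` to `w` at `s = 1`. -/
def unitaryFlow (w : Matrix ι ι ℂ) (s : ℝ) : Matrix ι ι ℂ :=
  cfc (fun z => Complex.exp (Complex.I * (s * z.arg : ℝ))) w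

lemma unitaryFlow_mem_unitaryGroup (hw : w ∈ unitaryGroup ι ℂ) (s : ℝ) :
    unitaryFlow w s ∈ unitaryGroup ι ℂ := by
  refine (cfc_unitary_iff _ w (hf := w.finite_spectrum.continuousOn _)).2 fun z _ => ?_
  rw [Complex.star_def, Complex.conj_mul', Complex.norm_exp_I_mul_ofReal]
  norm_num

lemma unitaryFlow_zero (hw : w ∈ unitaryGroup ι ℂ) : unitaryFlow w 0 = 1 := by
  simp [unitaryFlow, cfc_const_one ℂ w]

lemma unitaryFlow_one (hw : w ∈ unitaryGroup ι ℂ) : unitaryFlow w 1 = w := by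
  conv_rhs => rw [← cfc_id' ℂ w]
  refine cfc_congr fun z hz => ?_
  have h := Complex.norm_mul_exp_arg_mul_I z
  rw [norm_eq_one_of_mem_spectrum_unitary hw hz, Complex.ofReal_one, one_mul] at h
  simpa [mul_comm] using h

lemma frobenius_norm_unitaryFlow_sub_le (w : Matrix ι ι ℂ) (s t : ℝ) :
    ‖unitaryFlow w s - unitaryFlow w t‖ ≤ |s - t| * ‖argMatrix w‖ := by
  have hcont (g : ℂ → ℂ) : ContinuousOn g (spectrum ℂ w) := w.finite_spectrum.continuousOn g
  have hsmul : |s - t| * ‖argMatrix w‖ = ‖cfc (fun z => ((s - t : ℝ) : ℂ) • (z.arg : ℂ)) w‖ := by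
    rw [cfc_smul _ _ w (hcont _), norm_smul, Complex.norm_real, Real.norm_eq_abs, argMatrix]
  rw [hsmul, unitaryFlow, unitaryFlow, ← cfc_sub _ _ w (hcont _) (hcont _)]
  refine frobenius_norm_cfc_le fun z _ => ?_
  have hexp : Complex.exp (Complex.I * (s * z.arg : ℝ)) - Complex.exp (Complex.I * (t * z.arg : ℝ))
      = Complex.exp (Complex.I * (t * z.arg : ℝ)) *
        (Complex.exp (Complex.I * ((s - t) * z.arg : ℝ)) - 1) := by
    rw [mul_sub, ← Complex.exp_add, mul_one]
    push_cast
    ring_nf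
  rw [hexp, norm_mul, Complex.norm_exp_I_mul_ofReal, one_mul, smul_eq_mul, ← Complex.ofReal_mul,
    Complex.norm_real]
  exact Real.norm_exp_I_mul_ofReal_sub_one_le

lemma frobenius_norm_argMatrix_le (hw : w ∈ unitaryGroup ι ℂ) :
    ‖argMatrix w‖ ≤ Real.pi * √(Fintype.card ι) := by
  calc ‖argMatrix w‖ ≤ ‖cfc (fun _ => (Real.pi : ℂ)) w‖ := frobenius_norm_cfc_le fun z _ => by
        simpa [abs_of_pos Real.pi_pos] using z.abs_arg_le_pi
    _ = Real.pi * ‖(1 : Matrix ι ι ℂ)‖ := by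
        rw [cfc_const _ w, Algebra.algebraMap_eq_smul_one, norm_smul, Complex.norm_real,
          Real.norm_of_nonneg Real.pi_pos.le]
    _ = Real.pi * √(Fintype.card ι) := by
        rw [← frobenius_norm_of_unitary (one_mem (unitaryGroup ι ℂ)), Real.sqrt_sq (norm_nonneg _)]

lemma norm_le_frobenius_norm_of_mem_spectrum {a : Matrix ι ι ℂ} {z : ℂ} (hz : z ∈ spectrum ℂ a) :
    ‖z‖ ≤ ‖a‖ := by
  rw [← spectrum_toLin', ← Module.End.hasEigenvalue_iff_mem_spectrum] at hz
  obtain ⟨v, hv⟩ := hz.exists_hasEigenvector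
  have hav : a * replicateCol Unit v = z • replicateCol Unit v := by
    rw [← replicateCol_mulVec, ← toLin'_apply, hv.apply_eq_smul, replicateCol_smul]
  have hpos : 0 < ‖replicateCol Unit v‖ := norm_pos_iff.2 fun h => hv.2 (by simpa using h)
  refine le_of_mul_le_mul_right ?_ hpos
  rw [← norm_smul, ← hav]
  exact frobenius_norm_mul _ _

lemma mul_cos_le_sin {y : ℝ} (h0 : 0 ≤ y) (h1 : y ≤ Real.pi / 2) :
    y * Real.cos y ≤ Real.sin y := by
  rcases h1.eq_or_lt with rfl | h
  · simp
  · have hcos : 0 < Real.cos y := Real.cos_pos_of_mem_Ioo ⟨by linarith, h⟩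
    have := Real.le_tan h0 h
    rwa [Real.tan_eq_sin_div_cos, le_div_iff₀ hcos] at this

lemma one_sub_sq_mul_abs_le_norm_exp_sub_one {θ : ℝ} (hθ : |θ| ≤ Real.pi) :
    (1 - ‖Complex.exp (Complex.I * θ) - 1‖ ^ 2 / 4) * |θ| ≤
      ‖Complex.exp (Complex.I * θ) - 1‖ := by
  have h0 : 0 ≤ |θ| / 2 := by positivity
  have h1 : |θ| / 2 ≤ Real.pi / 2 := by linarith
  have hcos : 0 ≤ Real.cos (|θ| / 2) :=
    Real.cos_nonneg_of_neg_pi_div_two_le_of_le (by linarith) h1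
  have hchord : ‖Complex.exp (Complex.I * θ) - 1‖ = 2 * Real.sin (|θ| / 2) := by
    have hsin : 0 ≤ Real.sin (|θ| / 2) :=
      Real.sin_nonneg_of_nonneg_of_le_pi h0 (by linarith [Real.pi_pos])
    rw [Complex.norm_exp_I_mul_ofReal_sub_one, norm_mul, Real.norm_two, Real.norm_eq_abs,
      ← abs_of_nonneg hsin]
    rcases abs_choice θ with h | h <;> simp [h, neg_div]
  calc (1 - ‖Complex.exp (Complex.I * θ) - 1‖ ^ 2 / 4) * |θ|
      = 2 * (|θ| / 2 * Real.cos (|θ| / 2) * Real.cos (|θ| / 2)) := by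
        rw [hchord]
        linear_combination -|θ| * Real.sin_sq_add_cos_sq (|θ| / 2)
    _ ≤ 2 * (|θ| / 2 * Real.cos (|θ| / 2)) := by
        gcongr
        exact mul_le_of_le_one_right (by positivity) (Real.cos_le_one _)
    _ ≤ ‖Complex.exp (Complex.I * θ) - 1‖ := by
        rw [hchord]
        gcongr
        exact mul_cos_le_sin h0 h1

lemma one_sub_sq_mul_norm_argMatrix_le (hw : w ∈ unitaryGroup ι ℂ) :
    (1 - ‖w - 1‖ ^ 2 / 4) * ‖argMatrix w‖ ≤ ‖w - 1‖ := by
  have hcont (g : ℂ → ℂ) : ContinuousOn g (spectrum ℂ w) := w.finite_spectrum.continuousOn g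
  rcases le_total (1 - ‖w - 1‖ ^ 2 / 4) 0 with hneg | hpos
  · exact (mul_nonpos_of_nonpos_of_nonneg hneg (norm_nonneg _)).trans (norm_nonneg _)
  have hsub : cfc (fun z : ℂ => z - 1) w = w - 1 := by
    rw [cfc_sub _ _ w (hcont _) (hcont _), cfc_id' ℂ w, cfc_const_one ℂ w]
  have hsmul : (1 - ‖w - 1‖ ^ 2 / 4) * ‖argMatrix w‖ =
      ‖cfc (fun z => ((1 - ‖w - 1‖ ^ 2 / 4 : ℝ) : ℂ) • (z.arg : ℂ)) w‖ := by
    rw [cfc_smul _ _ w (hcont _), norm_smul, Complex.norm_real, Real.norm_of_nonneg hpos, argMatrix]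
  rw [hsmul]
  conv_rhs => rw [← hsub]
  refine frobenius_norm_cfc_le fun z hz => ?_
  have hz1 : ‖z - 1‖ ≤ ‖w - 1‖ := by
    refine norm_le_frobenius_norm_of_mem_spectrum ?_
    rw [← hsub, cfc_map_spectrum _ w (hf := hcont _)]
    exact ⟨z, hz, rfl⟩
  have hexp : Complex.exp (Complex.I * z.arg) = z := by
    have h := Complex.norm_mul_exp_arg_mul_I z
    rwa [norm_eq_one_of_mem_spectrum_unitary hw hz, Complex.ofReal_one, one_mul, mul_comm] at h
  calc ‖((1 - ‖w - 1‖ ^ 2 / 4 : ℝ) : ℂ) • (z.arg : ℂ)‖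
      = (1 - ‖w - 1‖ ^ 2 / 4) * |z.arg| := by
        rw [norm_smul, Complex.norm_real, Complex.norm_real, Real.norm_of_nonneg hpos,
          Real.norm_eq_abs]
    _ ≤ (1 - ‖z - 1‖ ^ 2 / 4) * |z.arg| := by gcongr
    _ ≤ ‖z - 1‖ := by
        simpa only [hexp] using one_sub_sq_mul_abs_le_norm_exp_sub_one z.abs_arg_le_pi

lemma frobenius_norm_unitaryFlow_mul_sub_le (w : Matrix ι ι ℂ) (hx : x ∈ unitaryGroup ι ℂ)
    (s t : ℝ) :
    ‖unitaryFlow w s * x - unitaryFlow w t * x‖ ≤ |s - t| * ‖argMatrix w‖ := by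
  rw [← sub_mul, frobenius_norm_mul_unitary _ hx]
  exact frobenius_norm_unitaryFlow_sub_le w s t

lemma unitaryFlow_one_mul_eq (hx : x ∈ unitaryGroup ι ℂ) (hy : y ∈ unitaryGroup ι ℂ) :
    unitaryFlow (y * xᴴ) 1 * x = y := by
  have hw : y * xᴴ ∈ unitaryGroup ι ℂ := mul_mem hy (Unitary.star_mem hx)
  rw [unitaryFlow_one hw, mul_assoc, ← star_eq_conjTranspose,
    mem_unitaryGroup_iff'.1 hx, mul_one]

lemma intrinsicDistE_unitaryGroup_le_norm_argMatrix (hx : x ∈ unitaryGroup ι ℂ)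
    (hy : y ∈ unitaryGroup ι ℂ) :
    intrinsicDistE edist (unitaryGroup ι ℂ : Set (Matrix ι ι ℂ)) x y ≤ ‖argMatrix (y * xᴴ)‖ₑ := by
  have hw : y * xᴴ ∈ unitaryGroup ι ℂ := mul_mem hy (Unitary.star_mem hx)
  have hlip : LipschitzWith ‖argMatrix (y * xᴴ)‖₊ fun s => unitaryFlow (y * xᴴ) s * x :=
    .of_dist_le_mul fun s t => by
      rw [dist_eq_norm, Real.dist_eq, mul_comm]
      exact frobenius_norm_unitaryFlow_mul_sub_le _ hx s t
  have h := intrinsicDistE_le_of_lipschitz hlip fun s =>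
    mul_mem (unitaryFlow_mem_unitaryGroup hw s) hx
  rwa [unitaryFlow_zero hw, one_mul, unitaryFlow_one_mul_eq hx hy] at h

lemma intrinsicDistE_unitaryGroup_le_mul_edist {δ : ℝ} (hδ : δ < 2) (hx : x ∈ unitaryGroup ι ℂ)
    (hy : y ∈ unitaryGroup ι ℂ) (hxy : dist x y ≤ δ) :
    intrinsicDistE edist (unitaryGroup ι ℂ : Set (Matrix ι ι ℂ)) x y ≤
      ENNReal.ofReal (1 - δ ^ 2 / 4)⁻¹ * edist x y := by
  have hw : y * xᴴ ∈ unitaryGroup ι ℂ := mul_mem hy (Unitary.star_mem hx)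
  have hnorm : ‖y * xᴴ - 1‖ = dist x y := by
    rw [dist_eq_norm, frobenius_norm_sub_eq_of_unitary hx, norm_sub_rev]
  have h0 : 0 ≤ dist x y := dist_nonneg
  have hpos : 0 < 1 - δ ^ 2 / 4 := by nlinarith
  refine (intrinsicDistE_unitaryGroup_le_norm_argMatrix hx hy).trans ?_
  rw [edist_dist, ← ENNReal.ofReal_mul (by positivity), ← ofReal_norm]
  refine ENNReal.ofReal_le_ofReal ((le_inv_mul_iff₀ hpos).2 ?_)
  calc (1 - δ ^ 2 / 4) * ‖argMatrix (y * xᴴ)‖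
      ≤ (1 - ‖y * xᴴ - 1‖ ^ 2 / 4) * ‖argMatrix (y * xᴴ)‖ := by rw [hnorm]; gcongr
    _ ≤ dist x y := hnorm ▸ one_sub_sq_mul_norm_argMatrix_le hw

lemma exists_unitary_chain (hx : x ∈ unitaryGroup ι ℂ) (hy : y ∈ unitaryGroup ι ℂ) {m : ℕ}
    (hm : m ≠ 0) :
    ∃ z : ℕ → Matrix ι ι ℂ, (∀ k, z k ∈ unitaryGroup ι ℂ) ∧ z 0 = x ∧ z m = y ∧
      ∀ k, dist (z k) (z (k + 1)) ≤ Real.pi * √(Fintype.card ι) / m := by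
  have hw : y * xᴴ ∈ unitaryGroup ι ℂ := mul_mem hy (Unitary.star_mem hx)
  have hm' : (m : ℝ) ≠ 0 := by exact_mod_cast hm
  refine ⟨fun k => unitaryFlow (y * xᴴ) (k / m) * x,
    fun k => mul_mem (unitaryFlow_mem_unitaryGroup hw _) hx, by simp [unitaryFlow_zero hw],
    by simp [div_self hm', unitaryFlow_one_mul_eq hx hy], fun k => ?_⟩
  have hstep : |(k : ℝ) / m - (k + 1 : ℕ) / m| = 1 / m := by
    rw [← sub_div, abs_div]
    simp
  calc dist (unitaryFlow (y * xᴴ) (k / m) * x) (unitaryFlow (y * xᴴ) ((k + 1 : ℕ) / m) * x)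
      ≤ 1 / m * ‖argMatrix (y * xᴴ)‖ := by
        rw [dist_eq_norm, ← hstep]
        exact frobenius_norm_unitaryFlow_mul_sub_le _ hx _ _
    _ ≤ 1 / m * (Real.pi * √(Fintype.card ι)) := by gcongr; exact frobenius_norm_argMatrix_le hw
    _ = Real.pi * √(Fintype.card ι) / m := by ring

end UnitaryFlow

section HaarMeasure

instance matrixBorelSpace {m n R : Type*} [Countable m] [Countable n] [TopologicalSpace R]
    [MeasurableSpace R] [SecondCountableTopology R] [BorelSpace R] :
    BorelSpace (Matrix m n R) :=
  (inferInstance : BorelSpace (m → n → R))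

instance matrixSecondCountableTopology {m n R : Type*} [Countable m] [Countable n]
    [TopologicalSpace R] [SecondCountableTopology R] :
    SecondCountableTopology (Matrix m n R) :=
  (inferInstance : SecondCountableTopology (m → n → R))

lemma isHaarLike_map {G X : Type*} [Group G] [TopologicalSpace G]
    [IsTopologicalGroup G] [CompactSpace G] [MeasurableSpace G] [BorelSpace G] [Monoid X]
    [MeasurableSpace X] [MeasurableMul X] (ν : Measure G) [ν.IsHaarMeasure]
    [IsProbabilityMeasure ν] (φ : G →* X) (hφ : Measurable φ)
    (hrange : MeasurableSet (Set.range φ)) :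
    IsHaarLike (Set.range φ) (ν.map φ) := by
  refine ⟨Measure.isProbabilityMeasure_map hφ.aemeasurable, ?_, ?_⟩
  · rw [Measure.map_apply hφ hrange.compl]
    simp
  · rintro _ ⟨g, rfl⟩
    have hright : ν.map (· * g) = ν := by
      have := Measure.isProbabilityMeasure_map (μ := ν) (measurable_mul_const g).aemeasurable
      exact Measure.isHaarMeasure_eq_of_isProbabilityMeasure _ _
    constructor
    · rw [Measure.map_map (measurable_const_mul _) hφ]
      conv_rhs => rw [← map_mul_left_eq_self ν g, Measure.map_map hφ (measurable_const_mul g)]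
      exact congrArg (ν.map ·) (funext fun x => (map_mul φ g x).symm)
    · rw [Measure.map_map (measurable_mul_const _) hφ]
      conv_rhs => rw [← hright, Measure.map_map hφ (measurable_mul_const g)]
      exact congrArg (ν.map ·) (funext fun x => (map_mul φ x g).symm)

lemma isHaarLike_haarLike {X : Type*} [MeasurableSpace X] [Mul X] {S : Set X}
    (h : ∃ μ, IsHaarLike S μ) : IsHaarLike S (haarLike S) := by
  rw [haarLike, dif_pos h]
  exact h.choose_spec

variable (n : ℕ)

lemma UU_eq_unitaryGroup : UU n = unitaryGroup (Fin n) ℂ :=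
  Set.ext fun _ => mem_unitaryGroup_iff.symm

lemma isClosed_UU : IsClosed (UU n) :=
  isClosed_eq (by fun_prop) continuous_const

lemma isCompact_UU : IsCompact (UU n) := by
  have hbox : IsCompact (Set.univ.pi fun _ : Fin n => Set.univ.pi fun _ : Fin n =>
      Metric.closedBall (0 : ℂ) 1) :=
    isCompact_univ_pi fun _ => isCompact_univ_pi fun _ => isCompact_closedBall 0 1
  refine hbox.of_isClosed_subset (isClosed_UU n) fun a ha i _ j _ => ?_
  rw [UU_eq_unitaryGroup] at ha
  simpa using entry_norm_bound_of_unitary ha i j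

instance unitaryGroupCompactSpace : CompactSpace (unitaryGroup (Fin n) ℂ) :=
  isCompact_iff_compactSpace.mp (UU_eq_unitaryGroup n ▸ isCompact_UU n)

lemma isHaarLike_haarLike_UU : IsHaarLike (UU n) (haarLike (UU n)) := by
  let ν : Measure (unitaryGroup (Fin n) ℂ) := Measure.haarMeasure ⊤
  have hν : IsProbabilityMeasure ν := ⟨Measure.haarMeasure_self⟩
  have hrange : Set.range (unitaryGroup (Fin n) ℂ).subtype = UU n := by
    rw [UU_eq_unitaryGroup, Submonoid.coe_subtype, Subtype.range_coe]
  refine isHaarLike_haarLike ⟨ν.map (unitaryGroup (Fin n) ℂ).subtype, ?_⟩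
  rw [← hrange]
  exact isHaarLike_map ν _ measurable_subtype_coe (hrange ▸ (isClosed_UU n).measurableSet)

instance isProbabilityMeasure_haarLike_UU : IsProbabilityMeasure (haarLike (UU n)) :=
  (isHaarLike_haarLike_UU n).1

lemma ae_haarLike_mem_UU : ∀ᵐ u ∂haarLike (UU n), u ∈ UU n :=
  (isHaarLike_haarLike_UU n).2.1

end HaarMeasure

section RecoupledWalk

open Function

/-- A random walk `x ↦ step x r` driven by independent noise `r` of law `ρ`, together with a way to
couple two walkers: when the walker at `x` uses the noise `r`, the one at `y` uses
`recouple x y r`, which has again law `ρ`. -/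
structure RecoupledWalk (X : Type*) {Ω : Type*} [MeasurableSpace X] [MeasurableSpace Ω]
    (ρ : Measure Ω) where
  step : X → Ω → X
  recouple : X → X → Ω → Ω
  measurable_step : Measurable (uncurry step)
  measurable_recouple : Measurable fun q : (X × X) × Ω => recouple q.1.1 q.1.2 q.2
  measurePreserving_recouple (x y : X) : MeasurePreserving (recouple x y) ρ ρ

namespace RecoupledWalk

section Coupling

variable {X Ω : Type*} [MeasurableSpace X] [MeasurableSpace Ω] {ρ : Measure Ω}
  (W : RecoupledWalk X ρ)

/-- The transition kernel of the walk. -/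
def kernel (x : X) : Measure X :=
  ρ.map (W.step x)

/-- The noise used by the `k`-th walker of a chain `z` whose first walker uses `r`, each walker
being coupled to its predecessor. -/
def chainNoise (z : ℕ → X) (r : Ω) : ℕ → Ω
  | 0 => r
  | k + 1 => W.recouple (z k) (z (k + 1)) (chainNoise z r k)

/-- One coupled step of all the walkers of a chain. -/
def chainStep (z : ℕ → X) (r : Ω) (k : ℕ) : X :=
  W.step (z k) (W.chainNoise z r k)

/-- The law after `t` coupled steps of a chain of walkers with initial law `η`. -/
def chainLaw (η : Measure (ℕ → X)) : ℕ → Measure (ℕ → X)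
  | 0 => η
  | t + 1 => ((chainLaw η t).prod ρ).map (uncurry W.chainStep)

lemma measurable_chainNoise (k : ℕ) :
    Measurable fun q : (ℕ → X) × Ω => W.chainNoise q.1 q.2 k := by
  induction k with
  | zero => exact measurable_snd
  | succ k ih =>
    exact W.measurable_recouple.comp <|
      (((measurable_pi_apply k).comp measurable_fst).prodMk
        ((measurable_pi_apply (k + 1)).comp measurable_fst)).prodMk ih

lemma measurable_chainStep : Measurable (uncurry W.chainStep) :=
  measurable_pi_iff.2 fun k => W.measurable_step.comp <|
    ((measurable_pi_apply k).comp measurable_fst).prodMk (W.measurable_chainNoise k)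

lemma measurePreserving_chainNoise (z : ℕ → X) (k : ℕ) :
    MeasurePreserving (fun r => W.chainNoise z r k) ρ ρ := by
  induction k with
  | zero => exact .id ρ
  | succ k ih => exact (W.measurePreserving_recouple (z k) (z (k + 1))).comp ih

variable [IsProbabilityMeasure ρ]

lemma measurable_kernel : Measurable W.kernel := by
  refine Measure.measurable_of_measurable_coe _ fun s hs => ?_
  simp only [kernel, Measure.map_apply (W.measurable_step.of_uncurry_left) hs]
  exact measurable_measure_prodMk_left (W.measurable_step hs)

lemma bind_kernel (μ : Measure X) :
    μ.bind W.kernel = (μ.prod ρ).map (uncurry W.step) := by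
  ext s hs
  rw [Measure.bind_apply hs W.measurable_kernel.aemeasurable,
    Measure.map_apply W.measurable_step hs, Measure.prod_apply (W.measurable_step hs)]
  simp only [kernel, Measure.map_apply (W.measurable_step.of_uncurry_left) hs]
  rfl

lemma bind_kernel_eq_self {μ : Measure X} [IsProbabilityMeasure μ]
    (h : ∀ᵐ r ∂ρ, μ.map (fun x => W.step x r) = μ) : μ.bind W.kernel = μ := by
  have hstep (r : Ω) : Measurable fun x => W.step x r := W.measurable_step.of_uncurry_right
  ext s hs
  rw [bind_kernel, Measure.map_apply W.measurable_step hs,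
    Measure.prod_apply_symm (W.measurable_step hs)]
  have hconst : ∀ᵐ r ∂ρ, μ ((fun x => (x, r)) ⁻¹' (uncurry W.step ⁻¹' s)) = μ s := by
    filter_upwards [h] with r hr
    conv_rhs => rw [← hr, Measure.map_apply (hstep r) hs]
    rfl
  rw [lintegral_congr_ae hconst, lintegral_const, measure_univ, mul_one]

instance isProbabilityMeasure_chainLaw (η : Measure (ℕ → X)) [IsProbabilityMeasure η] (t : ℕ) :
    IsProbabilityMeasure (W.chainLaw η t) := by
  induction t with
  | zero => assumption
  | succ t ih => exact Measure.isProbabilityMeasure_map W.measurable_chainStep.aemeasurable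

lemma map_eval_chainStep (η : Measure (ℕ → X)) [IsProbabilityMeasure η] (k : ℕ) :
    ((η.prod ρ).map (uncurry W.chainStep)).map (eval k) = (η.map (eval k)).bind W.kernel := by
  have := Measure.isProbabilityMeasure_map (μ := η) (measurable_pi_apply k).aemeasurable
  have hskew : MeasurePreserving (fun q : (ℕ → X) × Ω => (eval k q.1, W.chainNoise q.1 q.2 k))
      (η.prod ρ) ((η.map (eval k)).prod ρ) :=
    ((measurable_pi_apply k).measurePreserving η).skew_product (W.measurable_chainNoise k)
      (ae_of_all _ fun z => (W.measurePreserving_chainNoise z k).map_eq)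
  rw [bind_kernel, ← hskew.map_eq, Measure.map_map W.measurable_step hskew.measurable,
    Measure.map_map (measurable_pi_apply k) W.measurable_chainStep]
  rfl

lemma map_eval_chainLaw (η : Measure (ℕ → X)) [IsProbabilityMeasure η] (t k : ℕ) :
    (W.chainLaw η t).map (eval k) = kernelIterate W.kernel t (η.map (eval k)) := by
  induction t with
  | zero => rfl
  | succ t ih => rw [chainLaw, map_eval_chainStep, ih, kernelIterate]

lemma isCoupling_chainLaw (η : Measure (ℕ → X)) [IsProbabilityMeasure η] (m t : ℕ) :
    IsCoupling ((W.chainLaw η t).map fun z => (z 0, z m))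
      (kernelIterate W.kernel t (η.map (eval 0))) (kernelIterate W.kernel t (η.map (eval m))) := by
  have hends : Measurable fun z : ℕ → X => (z 0, z m) :=
    (measurable_pi_apply 0).prodMk (measurable_pi_apply m)
  constructor
  · rw [Measure.map_map measurable_fst hends, ← W.map_eval_chainLaw]
    rfl
  · rw [Measure.map_map measurable_snd hends, ← W.map_eval_chainLaw]
    rfl

end Coupling

end RecoupledWalk

/-- A chain in `S` whose consecutive points are at distance at most `δ`. -/
def IsFineChain {X : Type*} [PseudoEMetricSpace X] (S : Set X) (δ : ℝ≥0∞) (z : ℕ → X) : Prop :=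
  ∀ k, z k ∈ S ∧ edist (z k) (z (k + 1)) ≤ δ

/-- Any two points of `S` are joined by a chain in `S` of `m` steps shorter than `δ`. -/
def IsFinelyConnected {X : Type*} [PseudoEMetricSpace X] (S : Set X) (δ : ℝ≥0∞) (m : ℕ) : Prop :=
  ∀ x ∈ S, ∀ y ∈ S, ∃ z : ℕ → X, (∀ k, z k ∈ S) ∧ z 0 = x ∧ z m = y ∧
    ∀ k < m, edist (z k) (z (k + 1)) < δ

/-- The sum of the `p`-th powers of the first `m` steps of a chain, the quantity which contracts
along the coupled walk. -/
def chainEnergy {X : Type*} [PseudoEMetricSpace X] (p : ℝ) (m : ℕ) (z : ℕ → X) : ℝ≥0∞ :=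
  ∑ k ∈ Finset.range m, edist (z k) (z (k + 1)) ^ p

section Chain

variable {X : Type*} [PseudoEMetricSpace X] {S : Set X} {δ : ℝ≥0∞} {z : ℕ → X} {p : ℝ}

lemma chainEnergy_le (hz : IsFineChain S δ z) (hp : 0 ≤ p) (m : ℕ) :
    chainEnergy p m z ≤ m * δ ^ p :=
  (Finset.sum_le_card_nsmul _ _ _ fun k _ => ENNReal.rpow_le_rpow (hz k).2 hp).trans_eq
    (by rw [Finset.card_range, nsmul_eq_mul])

lemma sum_edist_rpow_le (hp : 1 ≤ p) (m : ℕ) (z : ℕ → X) :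
    (∑ k ∈ Finset.range m, edist (z k) (z (k + 1))) ^ p ≤
      (m : ℝ≥0∞) ^ (p - 1) * chainEnergy p m z := by
  simpa only [chainEnergy, Finset.card_range] using
    ENNReal.rpow_sum_le_const_mul_sum_rpow (Finset.range m) (fun k => edist (z k) (z (k + 1))) hp

variable [MeasurableSpace X] [OpensMeasurableSpace X] [SecondCountableTopology X]

lemma measurable_edist_eval (k l : ℕ) : Measurable fun z : ℕ → X => edist (z k) (z l) :=
  (measurable_pi_apply k).edist (measurable_pi_apply l)

lemma measurable_chainEnergy (p : ℝ) (m : ℕ) :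
    Measurable (chainEnergy p m : (ℕ → X) → ℝ≥0∞) :=
  Finset.measurable_sum _ fun k _ => (measurable_edist_eval k (k + 1)).pow_const p

lemma measurableSet_isFineChain (hS : MeasurableSet S) (δ : ℝ≥0∞) :
    MeasurableSet {z : ℕ → X | IsFineChain S δ z} := by
  simp only [IsFineChain, Set.ofPred_forall, Set.ofPred_and]
  exact .iInter fun k => (measurable_pi_apply k hS).inter
    (measurableSet_le (measurable_edist_eval k (k + 1)) measurable_const)

end Chain

namespace RecoupledWalk

section Contraction

variable {X Ω : Type*} [PseudoEMetricSpace X] [MeasurableSpace X] [MeasurableSpace Ω]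
  {ρ : Measure Ω} {W : RecoupledWalk X ρ} {S : Set X} {δ q : ℝ≥0∞} {p : ℝ}

variable (W S δ q p) in
/-- The walk preserves `S`, and the coupling of two walkers of `S` at distance at most `δ` does not
move them apart and contracts the `p`-th moment of their distance by the factor `q`. -/
structure IsLocallyContracting : Prop where
  step_mem {x : X} (hx : x ∈ S) : ∀ᵐ r ∂ρ, W.step x r ∈ S
  edist_step_le {x y : X} (hx : x ∈ S) (hy : y ∈ S) (hxy : edist x y ≤ δ) :
    ∀ᵐ r ∂ρ, edist (W.step x r) (W.step y (W.recouple x y r)) ≤ edist x y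
  lintegral_edist_step_le {x y : X} (hx : x ∈ S) (hy : y ∈ S) (hxy : edist x y ≤ δ) :
    ∫⁻ r, edist (W.step x r) (W.step y (W.recouple x y r)) ^ p ∂ρ ≤ q * edist x y ^ p

variable {z : ℕ → X} (hW : W.IsLocallyContracting S δ q p)

include hW

lemma IsLocallyContracting.ae_isFineChain_chainStep (hz : IsFineChain S δ z) :
    ∀ᵐ r ∂ρ, IsFineChain S δ (W.chainStep z r) := by
  refine ae_all_iff.2 fun k => ?_
  have hnoise := (W.measurePreserving_chainNoise z k).quasiMeasurePreserving
  filter_upwards [hnoise.ae (hW.step_mem (hz k).1),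
    hnoise.ae (hW.edist_step_le (hz k).1 (hz (k + 1)).1 (hz k).2)] with r hmem hle
  exact ⟨hmem, hle.trans (hz k).2⟩

variable [OpensMeasurableSpace X] [SecondCountableTopology X]

lemma IsLocallyContracting.lintegral_chainEnergy_chainStep_le (hz : IsFineChain S δ z) (m : ℕ) :
    ∫⁻ r, chainEnergy p m (W.chainStep z r) ∂ρ ≤ q * chainEnergy p m z := by
  have hstep (x : X) : Measurable (W.step x) := W.measurable_step.of_uncurry_left
  have hlink (k : ℕ) : Measurable fun r =>
      edist (W.step (z k) r) (W.step (z (k + 1)) (W.recouple (z k) (z (k + 1)) r)) ^ p :=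
    ((hstep _).edist ((hstep _).comp (W.measurePreserving_recouple _ _).measurable)).pow_const p
  have hnoise (k : ℕ) := W.measurePreserving_chainNoise z k
  calc ∫⁻ r, chainEnergy p m (W.chainStep z r) ∂ρ
      = ∑ k ∈ Finset.range m, ∫⁻ r, edist (W.step (z k) r)
          (W.step (z (k + 1)) (W.recouple (z k) (z (k + 1)) r)) ^ p ∂ρ := by
        rw [← Finset.sum_congr rfl fun k _ => (hnoise k).lintegral_comp (hlink k)]
        exact lintegral_finsetSum _ fun k _ => (hlink k).comp (hnoise k).measurable
    _ ≤ ∑ k ∈ Finset.range m, q * edist (z k) (z (k + 1)) ^ p :=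
        Finset.sum_le_sum fun k _ => hW.lintegral_edist_step_le (hz k).1 (hz (k + 1)).1 (hz k).2
    _ = q * chainEnergy p m z := (Finset.mul_sum _ _ _).symm

variable [IsProbabilityMeasure ρ] {η : Measure (ℕ → X)}

lemma IsLocallyContracting.ae_isFineChain_chainLaw (hS : MeasurableSet S)
    (hη : ∀ᵐ z ∂η, IsFineChain S δ z) (t : ℕ) :
    ∀ᵐ z ∂W.chainLaw η t, IsFineChain S δ z := by
  have hmeas := measurableSet_isFineChain hS δ
  induction t with
  | zero => exact hη
  | succ t ih =>
    rw [chainLaw, ae_map_iff W.measurable_chainStep.aemeasurable hmeas]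
    refine (Measure.ae_prod_iff_ae_ae (W.measurable_chainStep hmeas)).2 ?_
    filter_upwards [ih] with z hz using hW.ae_isFineChain_chainStep hz

lemma IsLocallyContracting.lintegral_chainEnergy_chainLaw_le (hS : MeasurableSet S)
    (hη : ∀ᵐ z ∂η, IsFineChain S δ z) (m t : ℕ) :
    ∫⁻ z, chainEnergy p m z ∂W.chainLaw η t ≤ q ^ t * ∫⁻ z, chainEnergy p m z ∂η := by
  have hmeas : Measurable (chainEnergy p m : (ℕ → X) → ℝ≥0∞) := measurable_chainEnergy p m
  induction t with
  | zero => rw [chainLaw, pow_zero, one_mul]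
  | succ t ih =>
    calc ∫⁻ z, chainEnergy p m z ∂W.chainLaw η (t + 1)
        = ∫⁻ z, ∫⁻ r, chainEnergy p m (W.chainStep z r) ∂ρ ∂W.chainLaw η t := by
          rw [chainLaw, lintegral_map hmeas W.measurable_chainStep]
          exact lintegral_prod _ (hmeas.comp W.measurable_chainStep).aemeasurable
      _ ≤ ∫⁻ z, q * chainEnergy p m z ∂W.chainLaw η t := by
          refine lintegral_mono_ae ?_
          filter_upwards [hW.ae_isFineChain_chainLaw hS hη t] with z hz
          exact hW.lintegral_chainEnergy_chainStep_le hz m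
      _ ≤ q * (q ^ t * ∫⁻ z, chainEnergy p m z ∂η) := by
          rw [lintegral_const_mul _ hmeas]
          gcongr
      _ = q ^ (t + 1) * ∫⁻ z, chainEnergy p m z ∂η := by rw [pow_succ', mul_assoc]

end Contraction

end RecoupledWalk

end RecoupledWalk

section ChainSelection

variable {X : Type*} {m : ℕ}

/-- The chain which starts at `q.1`, visits the points `w 1, …, w (m - 1)`, and stays at `q.2`
from time `m` on. -/
def chainWithEnds (m : ℕ) (w : ℕ → X) (q : X × X) (k : ℕ) : X :=
  if k = 0 then q.1 else if k < m then w k else q.2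

lemma chainWithEnds_zero (w : ℕ → X) (q : X × X) : chainWithEnds m w q 0 = q.1 :=
  if_pos rfl

lemma chainWithEnds_of_le (hm : m ≠ 0) (w : ℕ → X) (q : X × X) {k : ℕ} (hk : m ≤ k) :
    chainWithEnds m w q k = q.2 := by
  rw [chainWithEnds, if_neg (by lia), if_neg hk.not_gt]

lemma chainWithEnds_apply_ends (z : ℕ → X) {k : ℕ} (hk : k ≤ m) :
    chainWithEnds m z (z 0, z m) k = z k := by
  grind [chainWithEnds]

lemma chainWithEnds_mem {S : Set X} {w : ℕ → X} {q : X × X} (hw : ∀ k, w k ∈ S)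
    (h₁ : q.1 ∈ S) (h₂ : q.2 ∈ S) (k : ℕ) : chainWithEnds m w q k ∈ S := by
  grind [chainWithEnds]

lemma measurable_chainWithEnds [MeasurableSpace X] (m : ℕ) (w : ℕ → X) :
    Measurable (chainWithEnds m w) := by
  refine measurable_pi_iff.2 fun k => ?_
  unfold chainWithEnds
  split_ifs
  exacts [measurable_fst, measurable_const, measurable_snd]

lemma continuous_chainWithEnds_left [TopologicalSpace X] (m : ℕ) (q : X × X) (k : ℕ) :
    Continuous fun w : ℕ → X => chainWithEnds m w q k := by
  unfold chainWithEnds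
  split_ifs
  exacts [continuous_const, continuous_apply k, continuous_const]

variable [PseudoEMetricSpace X] [SecondCountableTopology X] {S : Set X} {δ : ℝ≥0∞}

/-- Having short links is an open condition, so the intermediate points can be taken in a dense
sequence of chains. -/
lemma IsFinelyConnected.exists_denseSeq (hS : IsFinelyConnected S δ m) [Nonempty S] (q : X × X)
    (h₁ : q.1 ∈ S) (h₂ : q.2 ∈ S) :
    ∃ j, ∀ k < m,
      edist (chainWithEnds m (fun l => (TopologicalSpace.denseSeq (ℕ → S) j l : X)) q k)
        (chainWithEnds m (fun l => (TopologicalSpace.denseSeq (ℕ → S) j l : X)) q (k + 1)) < δ := by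
  obtain ⟨z, hz, hz₀, hzm, hlink⟩ := hS q.1 h₁ q.2 h₂
  have hq : q = (z 0, z m) := by rw [hz₀, hzm]
  have hcont (k : ℕ) : Continuous fun v : ℕ → S => chainWithEnds m (fun l => (v l : X)) q k :=
    (continuous_chainWithEnds_left m q k).comp
      (continuous_pi fun l => continuous_subtype_val.comp (continuous_apply l))
  have hopen : IsOpen (⋂ k ∈ Finset.range m, {v : ℕ → S |
      edist (chainWithEnds m (fun l => (v l : X)) q k)
        (chainWithEnds m (fun l => (v l : X)) q (k + 1)) < δ}) :=
    isOpen_biInter_finset fun k _ => isOpen_lt ((hcont k).edist (hcont (k + 1))) continuous_const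
  obtain ⟨j, hj⟩ := (TopologicalSpace.denseRange_denseSeq (ℕ → S)).exists_mem_open hopen
    ⟨fun k => ⟨z k, hz k⟩, Set.mem_iInter₂.2 fun k hk => by
      have hk := Finset.mem_range.1 hk
      simpa only [Set.mem_ofPred_eq, hq, chainWithEnds_apply_ends z hk.le,
        chainWithEnds_apply_ends z (Nat.succ_le_of_lt hk)] using hlink k hk⟩
  exact ⟨j, fun k hk => Set.mem_iInter₂.1 hj k (Finset.mem_range.2 hk)⟩

variable [MeasurableSpace X] [OpensMeasurableSpace X]

lemma IsFinelyConnected.exists_measurable_isFineChain (hconn : IsFinelyConnected S δ m)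
    (hS : MeasurableSet S) (hne : S.Nonempty) (hm : m ≠ 0) :
    ∃ Φ : X × X → ℕ → X, Measurable Φ ∧ (∀ q, Φ q 0 = q.1) ∧ (∀ q, Φ q m = q.2) ∧
      ∀ q, q.1 ∈ S → q.2 ∈ S → IsFineChain S δ (Φ q) := by
  classical
  have : Nonempty S := hne.to_subtype
  let w (j l : ℕ) : X := TopologicalSpace.denseSeq (ℕ → S) j l
  let P (j : ℕ) (q : X × X) : Prop := q.1 ∈ S ∧ q.2 ∈ S →
    ∀ k < m, edist (chainWithEnds m (w j) q k) (chainWithEnds m (w j) q (k + 1)) < δ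
  have hP_meas (j : ℕ) : MeasurableSet {q | P j q} := by
    refine ((measurable_fst hS).inter (measurable_snd hS)).imp ?_
    simp only [Set.ofPred_forall]
    exact .iInter fun k => .iInter fun _ => measurableSet_lt
      ((measurable_edist_eval k (k + 1)).comp (measurable_chainWithEnds m (w j))) measurable_const
  have hP_ex (q : X × X) : ∃ j, P j q := by
    by_cases hq : q.1 ∈ S ∧ q.2 ∈ S
    · exact (hconn.exists_denseSeq q hq.1 hq.2).imp fun j hj _ => hj
    · exact ⟨0, fun h => absurd h hq⟩
  refine ⟨fun q => chainWithEnds m (w (Nat.find (hP_ex q))) q,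
    Measurable.find (f := fun j q => chainWithEnds m (w j) q)
      (fun j => measurable_chainWithEnds m (w j)) hP_meas hP_ex,
    fun q => chainWithEnds_zero _ q, fun q => chainWithEnds_of_le hm _ q le_rfl,
    fun q h₁ h₂ k => ⟨chainWithEnds_mem (fun l => Subtype.coe_prop _) h₁ h₂ k, ?_⟩⟩
  rcases lt_or_ge k m with hk | hk
  · exact (Nat.find_spec (hP_ex q) ⟨h₁, h₂⟩ k hk).le
  · simp only [chainWithEnds_of_le hm _ q hk, chainWithEnds_of_le hm _ q (hk.trans k.le_succ),
      edist_self, zero_le]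

end ChainSelection

section PathCoupling

open Function

variable {X Ω : Type*} [PseudoEMetricSpace X] [SecondCountableTopology X] [MeasurableSpace X]
  [OpensMeasurableSpace X] [MeasurableSpace Ω] {ρ : Measure Ω} [IsProbabilityMeasure ρ]
  {W : RecoupledWalk X ρ} {S : Set X} {δ q K : ℝ≥0∞} {p : ℝ} {m : ℕ}

/-- The distance `D` is dominated by the length of fine chains, which the power mean inequality
compares to their energy. -/
lemma RecoupledWalk.IsLocallyContracting.lintegral_rpow_chainLaw_le
    (hW : W.IsLocallyContracting S δ q p) (hp : 1 ≤ p) (hS : MeasurableSet S)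
    {D : X → X → ℝ≥0∞} (hD : ∀ z : ℕ → X, IsFineChain S δ z →
      D (z 0) (z m) ≤ K * ∑ k ∈ Finset.range m, edist (z k) (z (k + 1)))
    {η : Measure (ℕ → X)} [IsProbabilityMeasure η] (hη : ∀ᵐ z ∂η, IsFineChain S δ z) (t : ℕ) :
    ∫⁻ z, D (z 0) (z m) ^ p ∂W.chainLaw η t ≤ (K * m * δ) ^ p * q ^ t := by
  have hp₀ : 0 ≤ p := zero_le_one.trans hp
  have henergy : ∫⁻ z, chainEnergy p m z ∂η ≤ m * δ ^ p :=
    (lintegral_mono_ae (hη.mono fun z hz => chainEnergy_le hz hp₀ m)).trans_eq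
      (by rw [lintegral_const, measure_univ, mul_one])
  calc ∫⁻ z, D (z 0) (z m) ^ p ∂W.chainLaw η t
      ≤ ∫⁻ z, K ^ p * (m : ℝ≥0∞) ^ (p - 1) * chainEnergy p m z ∂W.chainLaw η t := by
        refine lintegral_mono_ae ((hW.ae_isFineChain_chainLaw hS hη t).mono fun z hz => ?_)
        refine (ENNReal.rpow_le_rpow (hD z hz) hp₀).trans ?_
        rw [ENNReal.mul_rpow_of_nonneg _ _ hp₀, mul_assoc]
        gcongr
        exact sum_edist_rpow_le hp m z
    _ = K ^ p * (m : ℝ≥0∞) ^ (p - 1) * ∫⁻ z, chainEnergy p m z ∂W.chainLaw η t :=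
        lintegral_const_mul _ (measurable_chainEnergy p m)
    _ ≤ K ^ p * (m : ℝ≥0∞) ^ (p - 1) * (q ^ t * (m * δ ^ p)) := by
        gcongr
        exact (hW.lintegral_chainEnergy_chainLaw_le hS hη m t).trans (by gcongr)
    _ = K ^ p * ((m : ℝ≥0∞) ^ (p - 1) * (m : ℝ≥0∞) ^ (1 : ℝ)) * δ ^ p * q ^ t := by
        rw [ENNReal.rpow_one]
        ring
    _ = (K * m * δ) ^ p * q ^ t := by
        rw [← ENNReal.rpow_add_of_nonneg _ _ (sub_nonneg.2 hp) zero_le_one, sub_add_cancel,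
          ← ENNReal.mul_rpow_of_nonneg _ _ hp₀, ← ENNReal.mul_rpow_of_nonneg _ _ hp₀]

theorem RecoupledWalk.IsLocallyContracting.wassersteinE_kernelIterate_le
    (hW : W.IsLocallyContracting S δ q p) (hp : 1 ≤ p) (hS : MeasurableSet S)
    (hconn : IsFinelyConnected S δ m) (hm : m ≠ 0)
    {D : X → X → ℝ≥0∞} (hD : ∀ z : ℕ → X, IsFineChain S δ z →
      D (z 0) (z m) ≤ K * ∑ k ∈ Finset.range m, edist (z k) (z (k + 1)))
    {μ ν : Measure X} [IsProbabilityMeasure μ] [IsProbabilityMeasure ν]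
    (hμ : ∀ᵐ x ∂μ, x ∈ S) (hν : ∀ᵐ x ∂ν, x ∈ S) (t : ℕ) :
    wassersteinE D p (kernelIterate W.kernel t μ) (kernelIterate W.kernel t ν) ≤
      K * m * δ * (q ^ t) ^ (1 / p) := by
  have hp₀ : 0 < p := zero_lt_one.trans_le hp
  obtain ⟨Φ, hΦ, hΦ₀, hΦm, hfine⟩ := hconn.exists_measurable_isFineChain hS hμ.exists hm
  let η := (μ.prod ν).map Φ
  have : IsProbabilityMeasure η := Measure.isProbabilityMeasure_map hΦ.aemeasurable
  have hη : ∀ᵐ z ∂η, IsFineChain S δ z := by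
    rw [ae_map_iff hΦ.aemeasurable (measurableSet_isFineChain hS δ)]
    filter_upwards [Measure.quasiMeasurePreserving_fst.ae hμ,
      Measure.quasiMeasurePreserving_snd.ae hν] with x using hfine x
  have hη₀ : η.map (eval 0) = μ := by
    rw [Measure.map_map (measurable_pi_apply 0) hΦ, show eval 0 ∘ Φ = Prod.fst from funext hΦ₀,
      measurePreserving_fst.map_eq]
  have hηm : η.map (eval m) = ν := by
    rw [Measure.map_map (measurable_pi_apply m) hΦ, show eval m ∘ Φ = Prod.snd from funext hΦm,
      measurePreserving_snd.map_eq]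
  have hcoupling := W.isCoupling_chainLaw η m t
  rw [hη₀, hηm] at hcoupling
  calc wassersteinE D p (kernelIterate W.kernel t μ) (kernelIterate W.kernel t ν)
      ≤ (∫⁻ x, D x.1 x.2 ^ p ∂(W.chainLaw η t).map fun z => (z 0, z m)) ^ (1 / p) :=
        iInf₂_le ((W.chainLaw η t).map fun z => (z 0, z m)) hcoupling
    _ ≤ (∫⁻ z, D (z 0) (z m) ^ p ∂W.chainLaw η t) ^ (1 / p) :=
        ENNReal.rpow_le_rpow (lintegral_map_le _ _) (one_div_nonneg.2 hp₀.le)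
    _ ≤ ((K * m * δ) ^ p * q ^ t) ^ (1 / p) :=
        ENNReal.rpow_le_rpow (hW.lintegral_rpow_chainLaw_le hp hS hD hη t)
          (one_div_nonneg.2 hp₀.le)
    _ = K * m * δ * (q ^ t) ^ (1 / p) := by
        rw [ENNReal.mul_rpow_of_nonneg _ _ (one_div_nonneg.2 hp₀.le), ← ENNReal.rpow_mul,
          mul_one_div_cancel hp₀.ne', ENNReal.rpow_one]

end PathCoupling

section MeasurableAligner

variable {𝕜 ι κ : Type*} [RCLike 𝕜]

lemma continuous_skewPart : Continuous (skewPart : Matrix κ κ 𝕜 → Matrix κ κ 𝕜) := by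
  unfold skewPart
  fun_prop

variable [Fintype ι] [Fintype κ] [DecidableEq κ] [MeasurableSpace 𝕜] [BorelSpace 𝕜]

lemma measurable_matrix_inv : Measurable fun a : Matrix κ κ 𝕜 => a⁻¹ := by
  simp only [Matrix.inv_def, Ring.inverse_eq_inv']
  exact (continuous_id.matrix_det.measurable.inv).smul continuous_id.matrix_adjugate.measurable

lemma measurable_cayley : Measurable (cayley : Matrix κ κ 𝕜 → Matrix κ κ 𝕜) :=
  ((continuous_const.sub continuous_id).measurable).mul
    (measurable_matrix_inv.comp (continuous_const.add continuous_id).measurable)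

lemma measurable_aligner (e : Matrix ι κ 𝕜) :
    Measurable fun q : Matrix ι ι 𝕜 × Matrix ι ι 𝕜 => aligner e q.1 q.2 := by
  refine measurable_cayley.comp ((continuous_skewPart.comp ?_).const_smul (2⁻¹ : ℝ)).measurable
  fun_prop

end MeasurableAligner

section CountableRotations

variable {P X Y : Type*} [Countable P] [MeasurableSpace P] [MeasurableSingletonClass P]
  [MeasurableSpace X] [Mul X] [MeasurableMul₂ X] [MeasurableSpace Y]

lemma measurable_prod_mul_of_countable {a : P → Y → X} (ha : ∀ p, Measurable (a p)) :
    Measurable fun q : Y × P × X => (q.2.1, q.2.2 * a q.2.1 q.1) := by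
  have hjoint : Measurable fun q : P × Y => a q.1 q.2 := measurable_from_prod_countable_right ha
  exact measurable_snd.fst.prodMk
    (measurable_snd.snd.fun_mul (hjoint.comp (measurable_snd.fst.prodMk measurable_fst)))

lemma IsHaarLike.measurePreserving_prod_mul {S : Set X} {μ : Measure X} (hμ : IsHaarLike S μ)
    (ν : Measure P) [SFinite ν] {a : P → X} (ha : ∀ p, a p ∈ S) :
    MeasurePreserving (fun r : P × X => (r.1, r.2 * a r.1)) (ν.prod μ) (ν.prod μ) := by
  have := hμ.1
  have hmul : Measurable fun r : P × X => r.2 * a r.1 :=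
    measurable_snd.fun_mul ((measurable_of_countable a).comp measurable_fst)
  exact (MeasurePreserving.id ν).skew_product hmul (ae_of_all _ fun p => (hμ.2.2 _ (ha p)).2)

end CountableRotations

section UnitaryWalk

variable {n : ℕ}

lemma continuous_embed2 (i j : Fin n) : Continuous (embed2 i j) := by
  refine continuous_matrix fun k l => ?_
  simp only [embed2, of_apply]
  split_ifs <;> fun_prop

lemma embed2_mem_unitaryGroup {p : Fin n × Fin n} (hp : p ∈ pairs n) {u : Matrix (Fin 2) (Fin 2) ℂ}
    (hu : u ∈ unitaryGroup (Fin 2) ℂ) : embed2 p.1 p.2 u ∈ unitaryGroup (Fin n) ℂ := by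
  have hne := (mem_pairs.1 hp).ne
  rw [embed2_eq_isometryExtend hne]
  exact isometryExtend_mem_unitaryGroup (pairInclusion_isometry hne) hu

variable (n) in
/-- The law of the noise driving one step of the walk on `U(n)`: a uniform pair `i < j` and an
independent Haar-random element of `U(2)`. -/
def walkNoise : Measure ((Fin n × Fin n) × Matrix (Fin 2) (Fin 2) ℂ) :=
  ((n.choose 2 : ℝ≥0∞)⁻¹ • ∑ p ∈ pairs n, Measure.dirac p).prod (haarLike (UU 2))

lemma lintegral_walkNoise {f : (Fin n × Fin n) × Matrix (Fin 2) (Fin 2) ℂ → ℝ≥0∞}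
    (hf : Measurable f) : ∫⁻ r, f r ∂walkNoise n =
      (n.choose 2 : ℝ≥0∞)⁻¹ * ∑ p ∈ pairs n, ∫⁻ u, f (p, u) ∂haarLike (UU 2) := by
  rw [walkNoise, lintegral_prod _ hf.aemeasurable, lintegral_smul_measure,
    lintegral_finsetSum_measure, smul_eq_mul]
  simp only [lintegral_dirac]

lemma isProbabilityMeasure_walkNoise (hn : 2 ≤ n) : IsProbabilityMeasure (walkNoise n) := by
  have hne : (n.choose 2 : ℝ≥0∞) ≠ 0 := by exact_mod_cast (Nat.choose_pos hn).ne'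
  refine ⟨?_⟩
  rw [← lintegral_one, lintegral_walkNoise measurable_const]
  simp only [lintegral_const, measure_univ, mul_one, Finset.sum_const, card_pairs, nsmul_eq_mul]
  exact ENNReal.inv_mul_cancel hne (by finiteness)

lemma ae_walkNoise (n : ℕ) :
    ∀ᵐ r ∂walkNoise n, r.1 ∈ pairs n ∧ r.2 ∈ unitaryGroup (Fin 2) ℂ := by
  have hpair : ∀ᵐ p ∂((n.choose 2 : ℝ≥0∞)⁻¹ • ∑ p ∈ pairs n, Measure.dirac p), p ∈ pairs n := by
    refine Measure.ae_smul_measure ?_ _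
    rw [ae_iff, Measure.finsetSum_apply]
    exact Finset.sum_eq_zero fun p hp => by simp [hp]
  have hrot : ∀ᵐ u ∂haarLike (UU 2), u ∈ unitaryGroup (Fin 2) ℂ :=
    (ae_haarLike_mem_UU 2).mono fun u hu => mem_unitaryGroup_iff.2 hu
  exact (Measure.quasiMeasurePreserving_fst.ae hpair).and
    (Measure.quasiMeasurePreserving_snd.ae hrot)

lemma measurable_embed2_mul :
    Measurable fun q : Matrix (Fin n) (Fin n) ℂ × (Fin n × Fin n) × Matrix (Fin 2) (Fin 2) ℂ =>
      embed2 q.2.1.1 q.2.1.2 q.2.2 * q.1 := by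
  have hembed2 : Measurable fun r : (Fin n × Fin n) × Matrix (Fin 2) (Fin 2) ℂ =>
      embed2 r.1.1 r.1.2 r.2 :=
    measurable_from_prod_countable_right fun p => (continuous_embed2 p.1 p.2).measurable
  exact (hembed2.comp measurable_snd).fun_mul measurable_fst

variable (n) in
/-- The walk on `U(n)`. The second walker rotates in the same plane as the first one, after having
been aligned with it. -/
def unitaryWalk : RecoupledWalk (Matrix (Fin n) (Fin n) ℂ) (walkNoise n) where
  step x r := embed2 r.1.1 r.1.2 r.2 * x
  recouple x y r := (r.1, r.2 * aligner (pairInclusion r.1.1 r.1.2) x y)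
  measurable_step := measurable_embed2_mul
  measurable_recouple := by
    have h := measurable_prod_mul_of_countable fun p : Fin n × Fin n =>
      measurable_aligner (𝕜 := ℂ) (pairInclusion p.1 p.2)
    exact h
  measurePreserving_recouple x y := by
    have haligner (p : Fin n × Fin n) : aligner (pairInclusion p.1 p.2) x y ∈ UU 2 := by
      rw [UU_eq_unitaryGroup]
      exact aligner_mem_unitaryGroup _ x y
    exact (isHaarLike_haarLike_UU 2).measurePreserving_prod_mul _ haligner

lemma kernel_unitaryWalk (n : ℕ) : (unitaryWalk n).kernel = unitKernel n := by
  ext x s hs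
  have hstep : Measurable ((unitaryWalk n).step x) :=
    (unitaryWalk n).measurable_step.of_uncurry_left
  have hembed (p : Fin n × Fin n) : Measurable fun u => embed2 p.1 p.2 u * x :=
    ((continuous_embed2 p.1 p.2).mul continuous_const).measurable
  rw [RecoupledWalk.kernel, Measure.map_apply hstep hs, ← lintegral_indicator_one (hstep hs),
    lintegral_walkNoise (measurable_one.indicator (hstep hs)), unitKernel, Measure.smul_apply,
    Measure.finsetSum_apply, smul_eq_mul]
  congr 1
  refine Finset.sum_congr rfl fun p _ => ?_
  rw [Measure.map_apply (hembed p) hs, ← lintegral_indicator_one (hembed p hs)]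
  rfl

lemma bind_unitKernel_haarLike (hn : 2 ≤ n) :
    (haarLike (UU n)).bind (unitKernel n) = haarLike (UU n) := by
  have := isProbabilityMeasure_walkNoise hn
  rw [← kernel_unitaryWalk]
  refine (unitaryWalk n).bind_kernel_eq_self ?_
  filter_upwards [ae_walkNoise n] with r hr
  refine ((isHaarLike_haarLike_UU n).2.2 _ ?_).1
  exact mem_unitaryGroup_iff.1 (embed2_mem_unitaryGroup hr.1 hr.2)

lemma kernelIterate_eq_self {X : Type*} [MeasurableSpace X] {P : X → Measure X} {μ : Measure X}
    (h : μ.bind P = μ) (t : ℕ) : kernelIterate P t μ = μ := by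
  induction t with
  | zero => rfl
  | succ t ih => rw [kernelIterate, ih, h]

end UnitaryWalk

section Mixing

open scoped Matrix.Norms.Frobenius

variable {n m : ℕ} {d : ℝ}

instance frobeniusOpensMeasurableSpace :
    @OpensMeasurableSpace (Matrix (Fin n) (Fin n) ℂ)
      PseudoEMetricSpace.toUniformSpace.toTopologicalSpace _ :=
  (inferInstance : OpensMeasurableSpace (Matrix (Fin n) (Fin n) ℂ))

instance frobeniusSecondCountableTopology :
    @SecondCountableTopology (Matrix (Fin n) (Fin n) ℂ)
      PseudoEMetricSpace.toUniformSpace.toTopologicalSpace :=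
  (inferInstance : SecondCountableTopology (Matrix (Fin n) (Fin n) ℂ))

lemma hsDistC_eq_edist : (hsDistC : Matrix (Fin n) (Fin n) ℂ → _ → ℝ≥0∞) = edist := by
  ext x y
  rw [hsDistC, ← RCLike.re_eq_complex_re, ← frobenius_norm_sq_eq_re_trace_conjTranspose_mul,
    Real.sqrt_sq (norm_nonneg _), edist_dist, dist_eq_norm]

lemma DU_eq_intrinsicDistE_edist (n : ℕ) :
    DU n = intrinsicDistE edist (unitaryGroup (Fin n) ℂ : Set (Matrix (Fin n) (Fin n) ℂ)) := by
  ext x y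
  rw [DU, hsDistC_eq_edist, UU_eq_unitaryGroup]

lemma DU_le_mul_sum_edist (hd₀ : 0 ≤ d) (hd : d < 2) {z : ℕ → Matrix (Fin n) (Fin n) ℂ}
    (hz : IsFineChain (unitaryGroup (Fin n) ℂ) (ENNReal.ofReal d) z) (m : ℕ) :
    DU n (z 0) (z m) ≤
      ENNReal.ofReal (1 - d ^ 2 / 4)⁻¹ * ∑ k ∈ Finset.range m, edist (z k) (z (k + 1)) := by
  rw [DU_eq_intrinsicDistE_edist, Finset.mul_sum]
  refine (intrinsicDistE_le_sum (hz 0).1 m).trans (Finset.sum_le_sum fun k _ => ?_)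
  exact intrinsicDistE_unitaryGroup_le_mul_edist hd (hz k).1 (hz (k + 1)).1
    ((edist_le_ofReal hd₀).1 (hz k).2)

lemma isFinelyConnected_unitaryGroup (hm : m ≠ 0) (hd : Real.pi * √n / m < d) :
    IsFinelyConnected (unitaryGroup (Fin n) ℂ : Set (Matrix (Fin n) (Fin n) ℂ))
      (ENNReal.ofReal d) m := by
  intro x hx y hy
  obtain ⟨z, hz, hz₀, hzm, hdist⟩ := exists_unitary_chain hx hy hm
  rw [Fintype.card_fin] at hdist
  exact ⟨z, hz, hz₀, hzm, fun k _ => edist_lt_ofReal.2 ((hdist k).trans_lt hd)⟩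

lemma edist_step_unitaryWalk {r : (Fin n × Fin n) × Matrix (Fin 2) (Fin 2) ℂ}
    (hr : r.1 ∈ pairs n ∧ r.2 ∈ unitaryGroup (Fin 2) ℂ) (x y : Matrix (Fin n) (Fin n) ℂ) :
    edist ((unitaryWalk n).step x r) ((unitaryWalk n).step y ((unitaryWalk n).recouple x y r)) =
      ENNReal.ofReal ‖x - embed2 r.1.1 r.1.2 (aligner (pairInclusion r.1.1 r.1.2) x y) * y‖ := by
  have hne := (mem_pairs.1 hr.1).ne
  have hmul (u v : Matrix (Fin 2) (Fin 2) ℂ) :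
      embed2 r.1.1 r.1.2 (u * v) = embed2 r.1.1 r.1.2 u * embed2 r.1.1 r.1.2 v := by
    simp only [embed2_eq_isometryExtend hne, isometryExtend_mul (pairInclusion_isometry hne)]
  simp only [unitaryWalk]
  rw [hmul, mul_assoc, edist_dist, dist_eq_norm, ← mul_sub,
    frobenius_norm_mul_of_isometry (mem_unitaryGroup_iff'.1 (embed2_mem_unitaryGroup hr.1 hr.2))]

lemma lintegral_edist_step_unitaryWalk_le (hn : 2 ≤ n) {x y : Matrix (Fin n) (Fin n) ℂ}
    (hx : x ∈ unitaryGroup (Fin n) ℂ) (hy : y ∈ unitaryGroup (Fin n) ℂ)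
    (hxy : ‖x - y‖ ^ 2 ≤ 2 / n) :
    ∫⁻ r, edist ((unitaryWalk n).step x r)
        ((unitaryWalk n).step y ((unitaryWalk n).recouple x y r)) ^ 2 ∂walkNoise n ≤
      ENNReal.ofReal (1 - 2 / n ^ 2) * edist x y ^ 2 := by
  let gap (p : Fin n × Fin n) : ℝ :=
    ‖x - embed2 p.1 p.2 (aligner (pairInclusion p.1 p.2) x y) * y‖ ^ 2
  have hchoose : (0 : ℝ) < n.choose 2 := by exact_mod_cast Nat.choose_pos hn
  have hgap : ∀ᵐ r ∂walkNoise n, edist ((unitaryWalk n).step x r)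
      ((unitaryWalk n).step y ((unitaryWalk n).recouple x y r)) ^ 2 = ENNReal.ofReal (gap r.1) := by
    filter_upwards [ae_walkNoise n] with r hr
    rw [edist_step_unitaryWalk hr, ENNReal.ofReal_pow (norm_nonneg _)]
  have hmeas : Measurable fun r : (Fin n × Fin n) × Matrix (Fin 2) (Fin 2) ℂ =>
      ENNReal.ofReal (gap r.1) :=
    (measurable_of_countable fun p => ENNReal.ofReal (gap p)).comp measurable_fst
  rw [lintegral_congr_ae hgap, lintegral_walkNoise hmeas, edist_dist, dist_eq_norm,
    ← ENNReal.ofReal_pow (norm_nonneg _), ← ENNReal.ofReal_mul' (sq_nonneg _)]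
  simp only [lintegral_const, measure_univ, mul_one]
  rw [← ENNReal.ofReal_sum_of_nonneg fun p _ => sq_nonneg _, ← ENNReal.ofReal_natCast,
    ← ENNReal.ofReal_inv_of_pos hchoose, ← ENNReal.ofReal_mul (inv_nonneg.2 hchoose.le)]
  refine ENNReal.ofReal_le_ofReal ((inv_mul_le_iff₀ hchoose).2 ?_)
  exact sum_pairs_norm_sub_embed2_aligner_sq_le hn hx hy hxy

lemma isLocallyContracting_unitaryWalk (hn : 2 ≤ n) (hd₀ : 0 ≤ d) (hd : d ^ 2 ≤ 2 / n) :
    (unitaryWalk n).IsLocallyContracting (unitaryGroup (Fin n) ℂ) (ENNReal.ofReal d)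
      (ENNReal.ofReal (1 - 2 / n ^ 2)) 2 where
  step_mem hx := (ae_walkNoise n).mono fun r hr =>
    mul_mem (embed2_mem_unitaryGroup hr.1 hr.2) hx
  edist_step_le {x y} hx hy _ := by
    filter_upwards [ae_walkNoise n] with r hr
    have hne := (mem_pairs.1 hr.1).ne
    rw [edist_step_unitaryWalk hr, edist_dist, dist_eq_norm, embed2_eq_isometryExtend hne]
    exact ENNReal.ofReal_le_ofReal
      (norm_sub_isometryExtend_aligner_le (pairInclusion_isometry hne) hx hy)
  lintegral_edist_step_le {x y} hx hy hxy := by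
    have hnorm : ‖x - y‖ ^ 2 ≤ 2 / n := by
      refine (pow_le_pow_left₀ (norm_nonneg _) ?_ 2).trans hd
      rwa [← dist_eq_norm, ← edist_le_ofReal hd₀]
    simpa only [ENNReal.rpow_two] using lintegral_edist_step_unitaryWalk_le hn hx hy hnorm

theorem wassersteinE_unitKernel_le_of_step (hn : 2 ≤ n) (hd : d ^ 2 ≤ 2 / n) (hm : m ≠ 0)
    (hmd : Real.pi * √n / m < d) {μ ν : Measure (Matrix (Fin n) (Fin n) ℂ)}
    [IsProbabilityMeasure μ] [IsProbabilityMeasure ν] (hμ : ∀ᵐ x ∂μ, x ∈ UU n)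
    (hν : ∀ᵐ x ∂ν, x ∈ UU n) (t : ℕ) :
    wassersteinE (DU n) 2 (kernelIterate (unitKernel n) t μ) (kernelIterate (unitKernel n) t ν) ≤
      ENNReal.ofReal ((1 - d ^ 2 / 4)⁻¹ * (m * d) * √((1 - 2 / n ^ 2) ^ t)) := by
  have hn' : (2 : ℝ) ≤ n := by exact_mod_cast hn
  have hd₀ : 0 ≤ d := le_trans (by positivity) hmd.le
  have hd₁ : d ^ 2 ≤ 1 := hd.trans ((div_le_one (by positivity)).2 hn')
  have hd₂ : d < 2 := by nlinarith
  have hq : (0 : ℝ) ≤ 1 - 2 / n ^ 2 := by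
    rw [sub_nonneg, div_le_one (by positivity)]
    nlinarith
  have := isProbabilityMeasure_walkNoise hn
  have hmeas : MeasurableSet (unitaryGroup (Fin n) ℂ : Set (Matrix (Fin n) (Fin n) ℂ)) :=
    UU_eq_unitaryGroup n ▸ (isClosed_UU n).measurableSet
  rw [UU_eq_unitaryGroup] at hμ hν
  rw [← kernel_unitaryWalk]
  refine ((isLocallyContracting_unitaryWalk hn hd₀ hd).wassersteinE_kernelIterate_le one_le_two
    hmeas (isFinelyConnected_unitaryGroup hm hmd) hm (fun z hz => DU_le_mul_sum_edist hd₀ hd₂ hz m)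
    hμ hν t).trans_eq ?_
  rw [← ENNReal.ofReal_pow hq, ENNReal.ofReal_rpow_of_nonneg (pow_nonneg hq t) one_half_pos.le,
    ← Real.sqrt_eq_rpow, ← ENNReal.ofReal_natCast, ← ENNReal.ofReal_mul (by bound),
    ← ENNReal.ofReal_mul (by bound), ← ENNReal.ofReal_mul (by bound), mul_assoc _ (m : ℝ)]

theorem wassersteinE_unitKernel_le (hn : 2 ≤ n) {μ ν : Measure (Matrix (Fin n) (Fin n) ℂ)}
    [IsProbabilityMeasure μ] [IsProbabilityMeasure ν] (hμ : ∀ᵐ x ∂μ, x ∈ UU n)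
    (hν : ∀ᵐ x ∂ν, x ∈ UU n) (t : ℕ) :
    wassersteinE (DU n) 2 (kernelIterate (unitKernel n) t μ) (kernelIterate (unitKernel n) t ν) ≤
      ENNReal.ofReal (Real.pi * √n * √((1 - 2 / n ^ 2) ^ t)) := by
  have hinv : Tendsto (fun m : ℕ => (m : ℝ)⁻¹) atTop (𝓝 0) := tendsto_inv_atTop_nhds_zero_nat
  let c : ℕ → ℝ := fun m => Real.pi * √n + (m : ℝ)⁻¹
  have hc : Tendsto c atTop (𝓝 (Real.pi * √n)) := by simpa [c] using hinv.const_add _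
  have hd : Tendsto (fun m => c m / m) atTop (𝓝 0) := by
    simpa [div_eq_mul_inv] using hc.mul hinv
  have hd_sq : Tendsto (fun m => (c m / m) ^ 2) atTop (𝓝 0) := by simpa using hd.pow 2
  have hlim : Tendsto (fun m : ℕ => (1 - (c m / m) ^ 2 / 4)⁻¹ * c m) atTop
      (𝓝 (Real.pi * √n)) := by
    simpa using (((hd_sq.div_const 4).const_sub 1).inv₀ (by norm_num)).mul hc
  refine ge_of_tendsto (ENNReal.tendsto_ofReal (hlim.mul_const _)) ?_
  have hn₀ : (0 : ℝ) < 2 / n := by positivity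
  filter_upwards [hd_sq.eventually_le_const hn₀, eventually_ne_atTop 0] with m hdm hm
  have hm' : (0 : ℝ) < m := by positivity
  have hmd : Real.pi * √n / m < c m / m := by
    gcongr
    simpa [c] using hm'
  simpa only [mul_div_cancel₀ (c m) hm'.ne'] using
    wassersteinE_unitKernel_le_of_step hn hdm hm hmd hμ hν t

lemma mul_sqrt_one_sub_pow_le {c ε s : ℝ} {t : ℕ} (hc : 0 < c) (hε : 0 < ε) (hs : 2 * s ≤ 1)
    (ht : Real.log (c / ε) ≤ s * t) : c * √((1 - 2 * s) ^ t) ≤ ε := by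
  have hpow : (1 - 2 * s) ^ t ≤ Real.exp (-(s * t)) ^ 2 := by
    calc (1 - 2 * s) ^ t ≤ Real.exp (-(2 * s)) ^ t := by
          gcongr
          exact Real.one_sub_le_exp_neg _
      _ = Real.exp (-(s * t)) ^ 2 := by
          rw [← Real.exp_nat_mul, ← Real.exp_nat_mul]
          push_cast
          ring_nf
  calc c * √((1 - 2 * s) ^ t) ≤ c * Real.exp (-(s * t)) := by
        gcongr
        exact Real.sqrt_le_iff.2 ⟨(Real.exp_pos _).le, hpow⟩
    _ ≤ c * Real.exp (-Real.log (c / ε)) := by gcongr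
    _ = ε := by
        rw [Real.exp_neg, Real.exp_log (by positivity)]
        field_simp

end Mixing

/-- **Theorem 5.** For every `n ≥ 2` and `ε > 0`, the random walk `L` on `U(n)` (each step
applies a Haar-random element of `U(2)` to the span of a uniformly chosen pair of
coordinate vectors) satisfies `τ_{D,2}(ε) ≤ ⌈n² ln(π√n/ε)⌉`: for every probability
measure `μ` on `U(n)` and every integer `t ≥ n² ln(π√n/ε)`, the time-`t` distribution is
within `ε` of the Haar measure of `U(n)` in `L²` transportation cost for the intrinsic
metric `D`. -/
theorem unitary_walk_mixing_time (n : ℕ) (hn : 2 ≤ n) (ε : ℝ) (hε : 0 < ε)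
    (μ : Measure (Matrix (Fin n) (Fin n) ℂ)) (hμprob : IsProbabilityMeasure μ)
    (hμU : μ (UU n)ᶜ = 0) (t : ℕ)
    (ht : (n : ℝ) ^ 2 * Real.log (Real.pi * Real.sqrt n / ε) ≤ (t : ℝ)) :
    wassersteinE (DU n) 2 (kernelIterate (unitKernel n) t μ) (haarLike (UU n)) ≤
      ENNReal.ofReal ε := by
  have hμ : ∀ᵐ x ∂μ, x ∈ UU n := hμU
  have hn' : (2 : ℝ) ≤ n := by exact_mod_cast hn
  have hrate : 2 * (1 / (n : ℝ) ^ 2) ≤ 1 := by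
    rw [mul_one_div, div_le_one (by positivity)]
    nlinarith
  have htime : Real.log (Real.pi * √n / ε) ≤ 1 / (n : ℝ) ^ 2 * t := by
    rwa [one_div_mul_eq_div, le_div_iff₀' (by positivity)]
  have hcontract := wassersteinE_unitKernel_le hn hμ (ae_haarLike_mem_UU n) t
  rw [kernelIterate_eq_self (bind_unitKernel_haarLike hn) t, ← mul_one_div 2] at hcontract
  exact hcontract.trans <| ENNReal.ofReal_le_ofReal <|
    mul_sqrt_one_sub_pow_le (by positivity) hε hrate htime

end
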